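/- arXiv:1308.5612 — 3 statements merged into one kernel-verified Lean document; each statement's English description precedes it below -/
import Mathlib

section
/- (Fractional Gagliardo–Nirenberg inequality.) Let d ≥ 1, s > 0, 0 < λ < d, p ∈ (1, ∞), and set θ = (2d−2pd+pλ)/(d−2ps−pd+pλ). If (d−λ)/(d+2s−λ) ≤ θ < 1, then there is a constant C such that for every Schwartz function ψ on ℝ^d: ‖D^{(d−λ)/2} ψ‖_{L^p} ≤ C · ‖ψ‖_{L^2}^{1−θ} · ‖D^{s+(d−λ)/2} ψ‖_{L^{2p/(p+1)}}^{θ}. -/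
open MeasureTheory SchwartzMap FourierTransform ENNReal

noncomputable section

/-- The Fourier multiplier `D^α = (√-Δ)^α` with symbol `|ξ|^α`, realized for nice functions
via the (Plancherel-normalized) Fourier integral and its inverse:
`D^α ψ = 𝓕⁻ ( |ξ|^α 𝓕ψ )`. -/
def Dop (d : ℕ) (α : ℝ) (ψ : EuclideanSpace ℝ (Fin d) → ℂ) :
    EuclideanSpace ℝ (Fin d) → ℂ :=
  𝓕⁻ (fun ξ => (‖ξ‖ ^ α : ℝ) • 𝓕 ψ ξ)

/-!
Decompose `D^a ψ = C ∫₀^∞ Δ_t D^a ψ dt/t` into frequency blocks, `Δ_t` localizing to `|ξ| ∼ 1/t`.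
Each block is the convolution of `ψ`, or of `D^b ψ`, with a rescaled Schwartz kernel. The value of
such a convolution at `x` is bounded by the maximal function at `x`, and by Hölder by an `L^q` norm
times a power of `t`; the geometric mean of these bounds with weight `τ` on the maximal function is
a negative power of `t` times a quantity depending on `ψ`, and a positive power of `t` times one
depending on `D^b ψ`. Using the first bound for large `t` and the second for small `t`, and cutting
at the optimal scale, gives a pointwise bound
`|D^a ψ| ≤ C ((M ψ)^τ ‖ψ‖_q^(1-τ))^(1-θ) ((M D^b ψ)^τ ‖D^b ψ‖_r^(1-τ))^θ`,
where `τ` is chosen so that Hölder's inequality and the maximal theorem bound the `L^p` norm of the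
right-hand side.
-/

open Metric Set Module
open scoped NNReal

section LayerCake

variable {X : Type*} [MeasurableSpace X] {μ : Measure X}

lemma lintegral_Ioi_rpow_eq_top (r : ℝ) :
    ∫⁻ t in Ioi (0 : ℝ), ENNReal.ofReal (t ^ r) = ∞ := by
  by_contra h
  refine not_integrableOn_Ioi_rpow r ((lintegral_ofReal_ne_top_iff_integrable ?_ ?_).1 h)
  · exact (by fun_prop : Measurable fun t : ℝ => t ^ r).aestronglyMeasurable
  · filter_upwards [ae_restrict_mem measurableSet_Ioi] with t ht
    exact Real.rpow_nonneg (mem_Ioi.1 ht).le r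

lemma lintegral_rpow_eq_lintegral_meas_ofReal_lt_mul {f : X → ℝ≥0∞} (hf : AEMeasurable f μ)
    {r : ℝ} (hr : 0 < r) :
    ∫⁻ x, f x ^ r ∂μ =
      ENNReal.ofReal r *
        ∫⁻ t in Ioi 0, μ {x | ENNReal.ofReal t < f x} * ENNReal.ofReal (t ^ (r - 1)) := by
  by_cases hfin : ∀ᵐ x ∂μ, f x < ∞
  · calc ∫⁻ x, f x ^ r ∂μ = ∫⁻ x, ENNReal.ofReal ((f x).toReal ^ r) ∂μ := by
          refine lintegral_congr_ae (hfin.mono fun x hx => ?_)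
          simp only
          rw [← ENNReal.ofReal_rpow_of_nonneg toReal_nonneg hr.le, ENNReal.ofReal_toReal hx.ne]
      _ = _ := lintegral_rpow_eq_lintegral_meas_lt_mul μ (ae_of_all _ fun _ => toReal_nonneg)
          hf.ennreal_toReal hr
      _ = _ := by
          congr 1
          refine setLIntegral_congr_fun measurableSet_Ioi fun t ht => ?_
          congr 1
          refine measure_congr (hfin.mono fun x hx => propext ?_)
          exact (ENNReal.ofReal_lt_iff_lt_toReal (mem_Ioi.1 ht).le hx.ne).symm
  · have hpos : μ {x | f x = ∞} ≠ 0 := by simpa [ae_iff] using hfin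
    have hlhs : ∫⁻ x, f x ^ r ∂μ = ∞ := by
      by_contra h
      refine hfin ((ae_lt_top' (hf.pow_const r) h).mono fun x hx => ?_)
      exact (ENNReal.rpow_lt_top_iff_of_pos hr).1 hx
    have hrhs : ∞ ≤ ∫⁻ t in Ioi 0, μ {x | ENNReal.ofReal t < f x} * ENNReal.ofReal (t ^ (r - 1)) :=
      calc ∞ = μ {x | f x = ∞} * ∫⁻ t in Ioi (0 : ℝ), ENNReal.ofReal (t ^ (r - 1)) := by
            rw [lintegral_Ioi_rpow_eq_top, ENNReal.mul_top hpos]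
        _ ≤ ∫⁻ t in Ioi 0, μ {x | f x = ∞} * ENNReal.ofReal (t ^ (r - 1)) :=
            lintegral_const_mul_le _ _
        _ ≤ _ := by
            gcongr with t x
            rintro hx
            simp [hx]
    rw [hlhs, top_le_iff.1 hrhs, ENNReal.mul_top (by simpa using hr)]

lemma ennreal_rpow_eq_mul_rpow_sub_one (x : ℝ≥0∞) {r : ℝ} (hr : 1 ≤ r) :
    x ^ r = x * x ^ (r - 1) := by
  conv_lhs => rw [← add_sub_cancel 1 r,
    ENNReal.rpow_add_of_nonneg _ _ zero_le_one (sub_nonneg.2 hr), ENNReal.rpow_one]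

lemma eLpNorm_ofReal_exponent {ε : Type*} [ENorm ε] {f : X → ε} {q : ℝ} (hq : 0 < q) :
    eLpNorm f (ENNReal.ofReal q) μ = (∫⁻ x, ‖f x‖ₑ ^ q ∂μ) ^ (1 / q) := by
  rw [eLpNorm_eq_lintegral_rpow_enorm_toReal (by simpa using hq) ENNReal.ofReal_ne_top,
    ENNReal.toReal_ofReal hq.le]

end LayerCake

section MaximalFunction

variable {X : Type*} [PseudoMetricSpace X] [MeasurableSpace X] {μ : Measure X}

/-- The uncentered Hardy–Littlewood maximal function of `f` with respect to `μ`. -/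
def maximalFunction (μ : Measure X) (f : X → ℝ≥0∞) (x : X) : ℝ≥0∞ :=
  ⨆ (c : X) (r : ℝ) (_ : x ∈ ball c r), ⨍⁻ y in ball c r, f y ∂μ

lemma lt_maximalFunction_iff {f : X → ℝ≥0∞} {x : X} {l : ℝ≥0∞} :
    l < maximalFunction μ f x ↔ ∃ c r, x ∈ ball c r ∧ l < ⨍⁻ y in ball c r, f y ∂μ := by
  simp only [maximalFunction, lt_iSup_iff, exists_prop]

lemma setLAverage_ball_le_maximalFunction (f : X → ℝ≥0∞) {x c : X} {r : ℝ} (hx : x ∈ ball c r) :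
    ⨍⁻ y in ball c r, f y ∂μ ≤ maximalFunction μ f x :=
  le_iSup_of_le c (le_iSup₂_of_le r hx le_rfl)

lemma setLIntegral_ball_le_mul_maximalFunction [ProperSpace X] [IsFiniteMeasureOnCompacts μ]
    (f : X → ℝ≥0∞) {x c : X} {r : ℝ} (hx : x ∈ ball c r) :
    ∫⁻ y in ball c r, f y ∂μ ≤ μ (ball c r) * maximalFunction μ f x := by
  rw [← measure_mul_setLAverage f measure_ball_lt_top.ne]
  gcongr
  exact setLAverage_ball_le_maximalFunction f hx

lemma measurable_maximalFunction [OpensMeasurableSpace X] (f : X → ℝ≥0∞) :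
    Measurable (maximalFunction μ f) := by
  refine LowerSemicontinuous.measurable fun x l hl => ?_
  obtain ⟨c, r, hxc, h⟩ := lt_maximalFunction_iff.1 hl
  filter_upwards [isOpen_ball.mem_nhds hxc] with y hy
  exact lt_maximalFunction_iff.2 ⟨c, r, hy, h⟩

lemma maximalFunction_le_maximalFunction_indicator_add (f : X → ℝ≥0∞) (l : ℝ≥0∞) (x : X) :
    maximalFunction μ f x ≤ maximalFunction μ ({y | l < f y}.indicator f) x + l := by
  refine iSup_le fun c => iSup₂_le fun r hx => ?_
  calc ⨍⁻ y in ball c r, f y ∂μ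
      ≤ ⨍⁻ y in ball c r, ({y | l < f y}.indicator f y + l) ∂μ := by
        refine lintegral_mono fun y => ?_
        by_cases h : l < f y
        · rw [indicator_of_mem (show y ∈ {y | l < f y} from h)]
          exact le_self_add
        · exact (not_lt.1 h).trans le_add_self
    _ = ⨍⁻ y in ball c r, {y | l < f y}.indicator f y ∂μ + ⨍⁻ _ in ball c r, l ∂μ :=
        lintegral_add_right _ measurable_const
    _ ≤ _ := by
        gcongr
        · exact setLAverage_ball_le_maximalFunction _ hx
        · rw [setLAverage_eq, setLIntegral_const]
          exact ENNReal.div_le_of_le_mul le_rfl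

variable [OpensMeasurableSpace X] {A : ℝ≥0}

lemma mul_measure_biUnion_closedBall_le [SecondCountableTopology X]
    (hA : ∀ c r, 0 < r → μ (closedBall c (5 * r)) ≤ A * μ (ball c r))
    (f : X → ℝ≥0∞) (l : ℝ≥0∞) {u : Set (X × ℝ)} (hpos : ∀ a ∈ u, 0 < a.2)
    (hdisj : u.PairwiseDisjoint fun a => ball a.1 a.2)
    (hl : ∀ a ∈ u, l * μ (ball a.1 a.2) ≤ ∫⁻ y in ball a.1 a.2, f y ∂μ) :
    l * μ (⋃ a ∈ u, closedBall a.1 (5 * a.2)) ≤ A * ∫⁻ y, f y ∂μ := by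
  have hcount : u.Countable := hdisj.countable_of_isOpen (fun a _ => isOpen_ball)
    fun a ha => ⟨a.1, mem_ball_self (hpos a ha)⟩
  calc l * μ (⋃ a ∈ u, closedBall a.1 (5 * a.2))
      ≤ l * ∑' a : u, A * μ (ball a.1.1 a.1.2) := by
        gcongr
        refine (measure_biUnion_le _ hcount _).trans (ENNReal.tsum_le_tsum fun a => ?_)
        exact hA _ _ (hpos a a.2)
    _ = A * ∑' a : u, l * μ (ball a.1.1 a.1.2) := by
        rw [ENNReal.tsum_mul_left, ENNReal.tsum_mul_left, mul_left_comm]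
    _ ≤ A * ∑' a : u, ∫⁻ y in ball a.1.1 a.1.2, f y ∂μ := by
        gcongr with a
        exact hl a a.2
    _ = A * ∫⁻ y in ⋃ a ∈ u, ball a.1 a.2, f y ∂μ := by
        rw [lintegral_biUnion hcount (fun a _ => measurableSet_ball) hdisj]
    _ ≤ A * ∫⁻ y, f y ∂μ := by
        gcongr
        exact Measure.restrict_le_self

lemma mul_measure_lt_setLAverage_ball_le [SecondCountableTopology X]
    (hA : ∀ c r, 0 < r → μ (closedBall c (5 * r)) ≤ A * μ (ball c r))
    (f : X → ℝ≥0∞) (l : ℝ≥0∞) (R : ℝ) :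
    l * μ {x | ∃ c r, r ≤ R ∧ x ∈ ball c r ∧ l < ⨍⁻ y in ball c r, f y ∂μ} ≤
      A * ∫⁻ y, f y ∂μ := by
  let t : Set (X × ℝ) := {a | 0 < a.2 ∧ a.2 ≤ R ∧ l < ⨍⁻ y in ball a.1 a.2, f y ∂μ}
  obtain ⟨u, hut, hdisj, hcov⟩ := Vitali.exists_disjoint_subfamily_covering_enlargement_closedBall
    t Prod.fst Prod.snd R (fun a ha => ha.2.1) 5 (by norm_num)
  have hsub : {x | ∃ c r, r ≤ R ∧ x ∈ ball c r ∧ l < ⨍⁻ y in ball c r, f y ∂μ} ⊆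
      ⋃ a ∈ u, closedBall a.1 (5 * a.2) := by
    rintro x ⟨c, r, hrR, hx, hlt⟩
    obtain ⟨b, hb, hbc⟩ := hcov (c, r) ⟨pos_of_mem_ball hx, hrR, hlt⟩
    exact mem_biUnion hb (hbc (ball_subset_closedBall hx))
  calc _ ≤ l * μ (⋃ a ∈ u, closedBall a.1 (5 * a.2)) := by gcongr
    _ ≤ _ := mul_measure_biUnion_closedBall_le hA f l (fun a ha => (hut ha).1)
        (hdisj.mono fun a => ball_subset_closedBall) fun a ha => by
          calc l * μ (ball a.1 a.2) ≤ μ (ball a.1 a.2) * ⨍⁻ y in ball a.1 a.2, f y ∂μ := by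
                rw [mul_comm]
                gcongr
                exact (hut ha).2.2.le
            _ ≤ _ := by
                rw [setLAverage_eq]
                exact ENNReal.mul_div_le

theorem mul_measure_lt_maximalFunction_le [SecondCountableTopology X]
    (hA : ∀ c r, 0 < r → μ (closedBall c (5 * r)) ≤ A * μ (ball c r))
    (f : X → ℝ≥0∞) (l : ℝ≥0∞) :
    l * μ {x | l < maximalFunction μ f x} ≤ A * ∫⁻ y, f y ∂μ := by
  let S (n : ℕ) : Set X :=
    {x | ∃ c r, r ≤ (n : ℝ) ∧ x ∈ ball c r ∧ l < ⨍⁻ y in ball c r, f y ∂μ}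
  have hS : Monotone S := fun m n hmn x ⟨c, r, hr, h⟩ =>
    ⟨c, r, hr.trans (by exact_mod_cast hmn), h⟩
  have hsub : {x | l < maximalFunction μ f x} ⊆ ⋃ n, S n := by
    intro x hx
    obtain ⟨c, r, h⟩ := lt_maximalFunction_iff.1 hx
    obtain ⟨n, hn⟩ := exists_nat_ge r
    exact mem_iUnion.2 ⟨n, c, r, hn, h⟩
  calc l * μ {x | l < maximalFunction μ f x} ≤ l * μ (⋃ n, S n) := by gcongr
    _ = ⨆ n, l * μ (S n) := by rw [hS.measure_iUnion, ENNReal.mul_iSup]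
    _ ≤ _ := iSup_le fun n => mul_measure_lt_setLAverage_ball_le hA f l n

lemma measure_ofReal_lt_maximalFunction_le [SecondCountableTopology X]
    (hA : ∀ c r, 0 < r → μ (closedBall c (5 * r)) ≤ A * μ (ball c r))
    {f : X → ℝ≥0∞} (hf : Measurable f) {t : ℝ} (ht : 0 < t) :
    μ {x | ENNReal.ofReal t < maximalFunction μ f x} ≤
      2 * (A : ℝ≥0∞) * (μ.withDensity f {x | ENNReal.ofReal t < 2 * f x} * ENNReal.ofReal t⁻¹) := by
  set l := ENNReal.ofReal (t / 2)
  have hl : ENNReal.ofReal t = 2 * l := by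
    rw [← ENNReal.ofReal_ofNat 2, ← ENNReal.ofReal_mul zero_le_two, mul_div_cancel₀ _ two_ne_zero]
  have hsub : {x | ENNReal.ofReal t < maximalFunction μ f x} ⊆
      {x | l < maximalFunction μ ({y | l < f y}.indicator f) x} := by
    intro x hx
    by_contra hle
    refine hx.not_ge ((maximalFunction_le_maximalFunction_indicator_add f l x).trans ?_)
    rw [hl, two_mul]
    gcongr
    exact not_lt.1 hle
  have hset : {x | ENNReal.ofReal t < 2 * f x} = {x | l < f x} := by
    ext x
    simp only [hl, mem_ofPred_eq]
    rw [ENNReal.mul_lt_mul_iff_right two_ne_zero ENNReal.ofNat_ne_top]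
  have hlinv : 2 * ENNReal.ofReal t⁻¹ * l = 1 := by
    rw [mul_right_comm, ← hl, ← ENNReal.ofReal_mul ht.le, mul_inv_cancel₀ ht.ne',
      ENNReal.ofReal_one]
  have hmeas : MeasurableSet {x | l < f x} := measurableSet_lt measurable_const hf
  calc μ {x | ENNReal.ofReal t < maximalFunction μ f x}
      ≤ 2 * ENNReal.ofReal t⁻¹ *
          (l * μ {x | l < maximalFunction μ ({y | l < f y}.indicator f) x}) := by
        rw [← mul_assoc, hlinv, one_mul]
        exact measure_mono hsub
    _ ≤ 2 * ENNReal.ofReal t⁻¹ * (A * ∫⁻ x, {y | l < f y}.indicator f x ∂μ) := by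
        gcongr 2 * ENNReal.ofReal t⁻¹ * ?_
        exact mul_measure_lt_maximalFunction_le hA _ l
    _ = _ := by
        rw [lintegral_indicator hmeas, hset, withDensity_apply f hmeas]
        ring

/-- Marcinkiewicz interpolation: the weak type bound at height `t` only sees `f` where it
exceeds `t / 2`. -/
theorem lintegral_maximalFunction_rpow_le [SecondCountableTopology X]
    (hA : ∀ c r, 0 < r → μ (closedBall c (5 * r)) ≤ A * μ (ball c r))
    {f : X → ℝ≥0∞} (hf : Measurable f) {r : ℝ} (hr : 1 < r) :
    ∫⁻ x, maximalFunction μ f x ^ r ∂μ ≤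
      ENNReal.ofReal (r / (r - 1)) * (2 ^ r * A) * ∫⁻ x, f x ^ r ∂μ := by
  have hr₁ : 0 < r - 1 := sub_pos.2 hr
  set ν := μ.withDensity f
  have hlayer : ∫⁻ x, (2 * f x) ^ (r - 1) ∂ν = ENNReal.ofReal (r - 1) *
      ∫⁻ t in Ioi 0, ν {x | ENNReal.ofReal t < 2 * f x} * ENNReal.ofReal (t ^ (r - 1 - 1)) :=
    lintegral_rpow_eq_lintegral_meas_ofReal_lt_mul (by fun_prop) hr₁
  have hdensity : ∫⁻ x, (2 * f x) ^ (r - 1) ∂ν = 2 ^ (r - 1) * ∫⁻ x, f x ^ r ∂μ := by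
    rw [lintegral_withDensity_eq_lintegral_mul _ hf (by fun_prop),
      ← lintegral_const_mul _ (by fun_prop)]
    congr with x
    rw [Pi.mul_apply, ENNReal.mul_rpow_of_nonneg _ _ hr₁.le, mul_left_comm,
      ennreal_rpow_eq_mul_rpow_sub_one (f x) hr.le]
  calc ∫⁻ x, maximalFunction μ f x ^ r ∂μ
      = ENNReal.ofReal r * ∫⁻ t in Ioi 0, μ {x | ENNReal.ofReal t < maximalFunction μ f x} *
          ENNReal.ofReal (t ^ (r - 1)) :=
        lintegral_rpow_eq_lintegral_meas_ofReal_lt_mul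
          (measurable_maximalFunction f).aemeasurable (zero_lt_one.trans hr)
    _ ≤ ENNReal.ofReal r * ∫⁻ t in Ioi 0,
          2 * (A : ℝ≥0∞) *
            (ν {x | ENNReal.ofReal t < 2 * f x} * ENNReal.ofReal (t ^ (r - 1 - 1))) := by
        gcongr ENNReal.ofReal r * ?_
        refine setLIntegral_mono' measurableSet_Ioi fun t (ht : 0 < t) => ?_
        rw [Real.rpow_sub_one ht.ne' (r - 1), div_eq_inv_mul, ENNReal.ofReal_mul (by positivity),
          ← mul_assoc (ν _), ← mul_assoc (2 * (A : ℝ≥0∞))]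
        gcongr
        exact measure_ofReal_lt_maximalFunction_le hA hf ht
    _ = ENNReal.ofReal r * (2 * A *
          (ENNReal.ofReal (r - 1)⁻¹ * (2 ^ (r - 1) * ∫⁻ x, f x ^ r ∂μ))) := by
        rw [lintegral_const_mul' _ _ (by finiteness), ← hdensity, hlayer,
          ← mul_assoc (ENNReal.ofReal _⁻¹), ← ENNReal.ofReal_mul (by positivity),
          inv_mul_cancel₀ hr₁.ne', ENNReal.ofReal_one, one_mul]
    _ = _ := by
        rw [div_eq_mul_inv, ENNReal.ofReal_mul (by positivity),
          ennreal_rpow_eq_mul_rpow_sub_one 2 hr.le]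
        ring

theorem eLpNorm_maximalFunction_le [SecondCountableTopology X]
    (hA : ∀ c r, 0 < r → μ (closedBall c (5 * r)) ≤ A * μ (ball c r))
    {f : X → ℝ≥0∞} (hf : Measurable f) {r : ℝ} (hr : 1 < r) :
    eLpNorm (maximalFunction μ f) (ENNReal.ofReal r) μ ≤
      (ENNReal.ofReal (r / (r - 1)) * (2 ^ r * A)) ^ (1 / r) * eLpNorm f (ENNReal.ofReal r) μ := by
  have hr₀ : 0 < r := zero_lt_one.trans hr
  rw [eLpNorm_ofReal_exponent hr₀, eLpNorm_ofReal_exponent hr₀,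
    ← ENNReal.mul_rpow_of_nonneg _ _ (by positivity)]
  gcongr ?_ ^ (1 / r)
  simpa only [enorm_eq_self] using lintegral_maximalFunction_rpow_le hA hf hr

end MaximalFunction

section KernelBounds

lemma setOf_lt_one_add_norm_rpow_neg_eq_ball {G : Type*} [SeminormedAddCommGroup G]
    {r s : ℝ} (hr : 0 < r) (hs : 0 < s) :
    {y : G | s < (1 + ‖y‖) ^ (-r)} = ball 0 (s ^ (-r)⁻¹ - 1) := by
  ext y
  rw [mem_ball_zero_iff, lt_sub_iff_add_lt', Real.lt_rpow_inv_iff_of_neg (by positivity) hs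
    (neg_lt_zero.2 hr)]
  rfl

variable {E F : Type*} [NormedAddCommGroup E] [NormedSpace ℝ E]
  [NormedAddCommGroup F] [NormedSpace ℝ F]

lemma exists_norm_le_mul_one_add_norm_rpow_neg (K : 𝓢(E, F)) (k : ℕ) :
    ∃ C : ℝ≥0, ∀ y, ‖K y‖ ≤ C * (1 + ‖y‖) ^ (-(k : ℝ)) := by
  have hdecay (y : E) := one_add_le_sup_seminorm_apply (𝕜 := ℝ) (m := (k, 0)) le_rfl le_rfl K y
  simp only [norm_iteratedFDeriv_zero] at hdecay
  refine ⟨.mk (2 ^ k * (Finset.Iic (k, 0)).sup (fun m => SchwartzMap.seminorm ℝ m.1 m.2) K)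
    (by positivity), fun y => ?_⟩
  rw [NNReal.coe_mk, Real.rpow_neg (by positivity), Real.rpow_natCast, ← div_eq_mul_inv,
    le_div_iff₀ (by positivity), mul_comm]
  exact hdecay y

variable [FiniteDimensional ℝ E] [MeasurableSpace E] [BorelSpace E] {μ : Measure E}
  [μ.IsAddHaarMeasure]

lemma addHaar_closedBall_five_mul (c : E) {r : ℝ} (hr : 0 < r) :
    μ (closedBall c (5 * r)) = (5 ^ finrank ℝ E : ℝ≥0) * μ (ball c r) := by
  rw [Measure.addHaar_closedBall μ c (by positivity),
    Measure.addHaar_ball_of_pos μ c hr, mul_pow, ENNReal.ofReal_mul (by positivity), mul_assoc]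
  simp [ENNReal.ofReal_pow]

variable (μ) in
theorem exists_eLpNorm_maximalFunction_le {r : ℝ} (hr : 1 < r) :
    ∃ C : ℝ≥0, ∀ f : E → ℝ≥0∞, Measurable f →
      eLpNorm (maximalFunction μ f) (ENNReal.ofReal r) μ ≤ C * eLpNorm f (ENNReal.ofReal r) μ := by
  set A : ℝ≥0∞ := (ENNReal.ofReal (r / (r - 1)) * (2 ^ r * (5 ^ finrank ℝ E : ℝ≥0))) ^ (1 / r)
  have hA : A ≠ ∞ := by finiteness
  refine ⟨A.toNNReal, fun f hf => ?_⟩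
  rw [ENNReal.coe_toNNReal hA]
  exact eLpNorm_maximalFunction_le (fun c s hs => (addHaar_closedBall_five_mul c hs).le) hf hr

lemma lintegral_comp_sub_smul {g : E → ℝ≥0∞} (hg : Measurable g) (x : E) {t : ℝ} (ht : 0 < t) :
    ∫⁻ y, g (x - t • y) ∂μ = ENNReal.ofReal (t ^ finrank ℝ E)⁻¹ * ∫⁻ y, g y ∂μ := by
  calc ∫⁻ y, g (x - t • y) ∂μ = ∫⁻ y, g (x - y) ∂(μ.map (t • ·)) :=
        (lintegral_map (f := fun y => g (x - y)) (by fun_prop) (by fun_prop)).symm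
    _ = _ := by
        rw [Measure.map_addHaar_smul μ ht.ne', lintegral_smul_measure,
          lintegral_sub_left_eq_self, abs_of_pos (by positivity), smul_eq_mul]

lemma setLIntegral_ball_comp_sub_smul_le {f : E → ℝ≥0∞} (hf : Measurable f) (x : E) {t : ℝ}
    (ht : 0 < t) (R : ℝ) :
    ∫⁻ y in ball 0 R, f (x - t • y) ∂μ ≤ μ (ball 0 R) * maximalFunction μ f x := by
  obtain hR | hR := le_or_gt R 0
  · simp [ball_eq_empty.2 hR]
  have hball : ball 0 R = (fun y => x - t • y) ⁻¹' ball x (t * R) := by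
    ext y
    simp [dist_eq_norm, norm_smul, abs_of_pos ht, ht]
  calc ∫⁻ y in ball 0 R, f (x - t • y) ∂μ
      = ∫⁻ y, (ball x (t * R)).indicator f (x - t • y) ∂μ := by
        rw [← lintegral_indicator measurableSet_ball, hball]
        exact lintegral_congr fun y => indicator_comp_right _
    _ = ENNReal.ofReal (t ^ finrank ℝ E)⁻¹ * ∫⁻ y in ball x (t * R), f y ∂μ := by
        rw [lintegral_comp_sub_smul (hf.indicator measurableSet_ball) x ht,
          lintegral_indicator measurableSet_ball]
    _ ≤ ENNReal.ofReal (t ^ finrank ℝ E)⁻¹ * (μ (ball x (t * R)) * maximalFunction μ f x) := by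
        gcongr
        exact setLIntegral_ball_le_mul_maximalFunction f (mem_ball_self (by positivity))
    _ = μ (ball 0 R) * maximalFunction μ f x := by
        rw [Measure.addHaar_ball_mul_of_pos μ x ht, ← mul_assoc, ← mul_assoc,
          ← ENNReal.ofReal_mul (by positivity), inv_mul_cancel₀ (by positivity),
          ENNReal.ofReal_one, one_mul]

/-- By the layer cake formula, a kernel whose superlevel sets are balls is a superposition of
indicators of balls. -/
lemma lintegral_mul_comp_sub_smul_le_of_superlevel_eq_ball {g : E → ℝ} (hg : Measurable g)
    (hg₀ : ∀ y, 0 ≤ g y) (hball : ∀ s > 0, ∃ R, {y | s < g y} = ball 0 R)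
    {f : E → ℝ≥0∞} (hf : Measurable f) (x : E) {t : ℝ} (ht : 0 < t) :
    ∫⁻ y, ENNReal.ofReal (g y) * f (x - t • y) ∂μ ≤
      (∫⁻ y, ENNReal.ofReal (g y) ∂μ) * maximalFunction μ f x := by
  have hft : Measurable fun y => f (x - t • y) := by fun_prop
  calc ∫⁻ y, ENNReal.ofReal (g y) * f (x - t • y) ∂μ
      = ∫⁻ y, ENNReal.ofReal (g y) ∂(μ.withDensity fun y => f (x - t • y)) := by
        rw [lintegral_withDensity_eq_lintegral_mul _ hft (by fun_prop)]
        simp only [Pi.mul_apply, mul_comm]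
    _ = ∫⁻ s in Ioi 0, μ.withDensity (fun y => f (x - t • y)) {y | s < g y} :=
        lintegral_eq_lintegral_meas_lt _ (ae_of_all _ hg₀) hg.aemeasurable
    _ ≤ ∫⁻ s in Ioi 0, μ {y | s < g y} * maximalFunction μ f x := by
        refine setLIntegral_mono' measurableSet_Ioi fun s hs => ?_
        obtain ⟨R, hR⟩ := hball s hs
        rw [hR, withDensity_apply _ measurableSet_ball]
        exact setLIntegral_ball_comp_sub_smul_le hf x ht R
    _ = (∫⁻ y, ENNReal.ofReal (g y) ∂μ) * maximalFunction μ f x := by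
        have hanti : Antitone fun s => μ {y | s < g y} :=
          fun s s' hs => measure_mono fun y hy => hs.trans_lt hy
        rw [lintegral_mul_const _ hanti.measurable,
          lintegral_eq_lintegral_meas_lt _ (ae_of_all _ hg₀) hg.aemeasurable]

theorem exists_lintegral_enorm_mul_comp_sub_smul_le_maximalFunction (K : 𝓢(E, F)) :
    ∃ C : ℝ≥0, ∀ f : E → ℝ≥0∞, Measurable f → ∀ x, ∀ t : ℝ, 0 < t →
      ∫⁻ y, ‖K y‖ₑ * f (x - t • y) ∂μ ≤ C * maximalFunction μ f x := by
  set n := finrank ℝ E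
  obtain ⟨A, hA⟩ := exists_norm_le_mul_one_add_norm_rpow_neg K (n + 1)
  let g (y : E) : ℝ := (1 + ‖y‖) ^ (-((n + 1 : ℕ) : ℝ))
  have hg : Integrable g μ := integrable_one_add_norm (by norm_cast; omega)
  have hg_fin : ∫⁻ y, ENNReal.ofReal (g y) ∂μ ≠ ∞ := hg.lintegral_lt_top.ne
  refine ⟨A * (∫⁻ y, ENNReal.ofReal (g y) ∂μ).toNNReal, fun f hf x t ht => ?_⟩
  calc ∫⁻ y, ‖K y‖ₑ * f (x - t • y) ∂μ
      ≤ ∫⁻ y, A * (ENNReal.ofReal (g y) * f (x - t • y)) ∂μ := by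
        refine lintegral_mono fun y => ?_
        simp only
        rw [← mul_assoc, ← ofReal_norm, ← ENNReal.ofReal_coe_nnreal,
          ← ENNReal.ofReal_mul A.coe_nonneg]
        gcongr
        exact hA y
    _ = A * ∫⁻ y, ENNReal.ofReal (g y) * f (x - t • y) ∂μ :=
        lintegral_const_mul' _ _ ENNReal.coe_ne_top
    _ ≤ A * ((∫⁻ y, ENNReal.ofReal (g y) ∂μ) * maximalFunction μ f x) := by
        gcongr
        exact lintegral_mul_comp_sub_smul_le_of_superlevel_eq_ball (by fun_prop)
          (fun y => by positivity)
          (fun s hs => ⟨_, setOf_lt_one_add_norm_rpow_neg_eq_ball (by positivity) hs⟩) hf x ht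
    _ = _ := by rw [ENNReal.coe_mul, ENNReal.coe_toNNReal hg_fin, mul_assoc]

theorem exists_lintegral_enorm_mul_comp_sub_smul_le_eLpNorm (K : 𝓢(E, F)) {q : ℝ} (hq : 1 < q) :
    ∃ C : ℝ≥0, ∀ f : E → ℝ≥0∞, Measurable f → ∀ x, ∀ t : ℝ, 0 < t →
      ∫⁻ y, ‖K y‖ₑ * f (x - t • y) ∂μ ≤
        C * (ENNReal.ofReal (t ^ (-(finrank ℝ E / q))) * eLpNorm f (ENNReal.ofReal q) μ) := by
  have hconj := (Real.HolderConjugate.conjExponent hq).symm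
  set q' := q.conjExponent
  have hK : eLpNorm K (ENNReal.ofReal q') μ ≠ ∞ := (K.memLp _ μ).eLpNorm_ne_top
  refine ⟨(eLpNorm K (ENNReal.ofReal q') μ).toNNReal, fun f hf x t ht => ?_⟩
  calc ∫⁻ y, ‖K y‖ₑ * f (x - t • y) ∂μ
      ≤ (∫⁻ y, ‖K y‖ₑ ^ q' ∂μ) ^ (1 / q') * (∫⁻ y, f (x - t • y) ^ q ∂μ) ^ (1 / q) :=
        ENNReal.lintegral_mul_le_Lp_mul_Lq μ hconj (by fun_prop) (by fun_prop)
    _ = eLpNorm K (ENNReal.ofReal q') μ *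
          (ENNReal.ofReal (t ^ finrank ℝ E)⁻¹ * ∫⁻ y, f y ^ q ∂μ) ^ (1 / q) := by
        rw [eLpNorm_ofReal_exponent hconj.pos, lintegral_comp_sub_smul (hf.pow_const q) x ht]
    _ = _ := by
        have hscale : ((t ^ finrank ℝ E)⁻¹) ^ (1 / q) = t ^ (-(finrank ℝ E / q)) := by
          rw [← Real.rpow_natCast, ← Real.rpow_neg ht.le, ← Real.rpow_mul ht.le]
          ring_nf
        rw [ENNReal.coe_toNNReal hK, ENNReal.mul_rpow_of_nonneg _ _ (by positivity),
          ENNReal.ofReal_rpow_of_pos (by positivity), hscale,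
          eLpNorm_ofReal_exponent (f := f) (by positivity)]
        simp only [enorm_eq_self]

theorem exists_lintegral_enorm_mul_comp_sub_smul_le (K : 𝓢(E, F)) {q τ : ℝ} (hq : 1 < q)
    (hτ₀ : 0 ≤ τ) (hτ₁ : τ ≤ 1) :
    ∃ C : ℝ≥0, ∀ f : E → ℝ≥0∞, Measurable f → ∀ x, ∀ t : ℝ, 0 < t →
      ∫⁻ y, ‖K y‖ₑ * f (x - t • y) ∂μ ≤
        ENNReal.ofReal (t ^ (-((1 - τ) * (finrank ℝ E / q)))) *
          (C * (maximalFunction μ f x ^ τ * eLpNorm f (ENNReal.ofReal q) μ ^ (1 - τ))) := by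
  obtain ⟨C₁, h₁⟩ := exists_lintegral_enorm_mul_comp_sub_smul_le_maximalFunction (μ := μ) K
  obtain ⟨C₂, h₂⟩ := exists_lintegral_enorm_mul_comp_sub_smul_le_eLpNorm (μ := μ) K hq
  have hτ : 0 ≤ 1 - τ := sub_nonneg.2 hτ₁
  refine ⟨C₁ ^ τ * C₂ ^ (1 - τ), fun f hf x t ht => ?_⟩
  set I := ∫⁻ y, ‖K y‖ₑ * f (x - t • y) ∂μ
  calc I = I ^ τ * I ^ (1 - τ) := by
        rw [← ENNReal.rpow_add_of_nonneg _ _ hτ₀ hτ, add_sub_cancel, ENNReal.rpow_one]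
    _ ≤ (C₁ * maximalFunction μ f x) ^ τ *
          (C₂ * (ENNReal.ofReal (t ^ (-(finrank ℝ E / q))) * eLpNorm f (ENNReal.ofReal q) μ)) ^
            (1 - τ) := by
        gcongr
        · exact h₁ f hf x t ht
        · exact h₂ f hf x t ht
    _ = _ := by
        simp only [ENNReal.mul_rpow_of_nonneg _ _ hτ₀, ENNReal.mul_rpow_of_nonneg _ _ hτ,
          ENNReal.ofReal_rpow_of_pos (Real.rpow_pos_of_pos ht _), ← Real.rpow_mul ht.le,
          ENNReal.coe_mul, ENNReal.coe_rpow_of_nonneg _ hτ₀, ENNReal.coe_rpow_of_nonneg _ hτ]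
        ring_nf

end KernelBounds

section ScaleIntegral

lemma lintegral_Ioc_rpow_sub_one {e T : ℝ} (he : 0 < e) (hT : 0 ≤ T) :
    ∫⁻ t in Ioc 0 T, ENNReal.ofReal (t ^ (e - 1)) = ENNReal.ofReal (T ^ e / e) := by
  have hint : IntervalIntegrable (fun t : ℝ => t ^ (e - 1)) volume 0 T :=
    intervalIntegral.intervalIntegrable_rpow' (by linarith)
  rw [← ofReal_integral_eq_lintegral_ofReal ((intervalIntegrable_iff_integrableOn_Ioc_of_le hT).1
      hint), ← intervalIntegral.integral_of_le hT, integral_rpow (Or.inl (by linarith)),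
    sub_add_cancel, Real.zero_rpow he.ne', sub_zero]
  filter_upwards [ae_restrict_mem measurableSet_Ioc] with t ht
  exact Real.rpow_nonneg ht.1.le _

lemma lintegral_Ioi_rpow_neg_sub_one {l T : ℝ} (hl : 0 < l) (hT : 0 < T) :
    ∫⁻ t in Ioi T, ENNReal.ofReal (t ^ (-l - 1)) = ENNReal.ofReal (T ^ (-l) / l) := by
  rw [← ofReal_integral_eq_lintegral_ofReal (integrableOn_Ioi_rpow_of_lt (by linarith) hT),
    integral_Ioi_rpow_of_lt (by linarith) hT, sub_add_cancel, neg_div_neg_eq]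
  filter_upwards [ae_restrict_mem measurableSet_Ioi] with t ht
  exact Real.rpow_nonneg (hT.trans ht).le _

variable {l e : ℝ} {X Y : ℝ≥0∞} {h : ℝ → ℝ≥0∞}

lemma ofReal_inv_mul_le_of_le {t a : ℝ} (ht : 0 < t) {x : ℝ≥0∞}
    (hx : x ≤ ENNReal.ofReal (t ^ a) * X) :
    ENNReal.ofReal t⁻¹ * x ≤ ENNReal.ofReal (t ^ (a - 1)) * X := by
  rw [Real.rpow_sub_one ht.ne', div_eq_inv_mul, ENNReal.ofReal_mul (by positivity), mul_assoc]
  gcongr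

lemma lintegral_ofReal_inv_mul_le (hl : 0 < l) (he : 0 < e)
    (hX : ∀ t, 0 < t → h t ≤ ENNReal.ofReal (t ^ (-l)) * X)
    (hY : ∀ t, 0 < t → h t ≤ ENNReal.ofReal (t ^ e) * Y) {T : ℝ} (hT : 0 < T) :
    ∫⁻ t in Ioi 0, ENNReal.ofReal t⁻¹ * h t ≤
      ENNReal.ofReal (T ^ e / e) * Y + ENNReal.ofReal (T ^ (-l) / l) * X := by
  rw [← Ioc_union_Ioi_eq_Ioi hT.le, lintegral_union measurableSet_Ioi (Ioc_disjoint_Ioi le_rfl),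
    ← lintegral_Ioc_rpow_sub_one he hT.le, ← lintegral_Ioi_rpow_neg_sub_one hl hT,
    ← lintegral_mul_const _ (by fun_prop), ← lintegral_mul_const _ (by fun_prop)]
  gcongr ?_ + ?_
  · exact setLIntegral_mono' measurableSet_Ioc fun t ht =>
      ofReal_inv_mul_le_of_le ht.1 (hY t ht.1)
  · exact setLIntegral_mono' measurableSet_Ioi fun t ht =>
      ofReal_inv_mul_le_of_le (hT.trans ht) (hX t (hT.trans ht))

lemma exists_rpow_mul_eq_and_rpow_neg_mul_eq {x y : ℝ} (hx : 0 < x) (hy : 0 < y) (hl : 0 < l)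
    (he : 0 < e) :
    ∃ T > 0, T ^ e * y = x ^ (e / (l + e)) * y ^ (l / (l + e)) ∧
      T ^ (-l) * x = x ^ (e / (l + e)) * y ^ (l / (l + e)) := by
  have hx' : x = x ^ (e / (l + e)) * x ^ (l / (l + e)) := by
    rw [← Real.rpow_add hx, ← add_div, add_comm e, div_self (by positivity), Real.rpow_one]
  have hy' : y = y ^ (e / (l + e)) * y ^ (l / (l + e)) := by
    rw [← Real.rpow_add hy, ← add_div, add_comm e, div_self (by positivity), Real.rpow_one]
  refine ⟨(x / y) ^ (l + e)⁻¹, by positivity, ?_, ?_⟩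
  · rw [← Real.rpow_mul (by positivity), inv_mul_eq_div, Real.div_rpow hx.le hy.le]
    nth_rw 2 [hy']
    field_simp
  · rw [← Real.rpow_mul (by positivity), inv_mul_eq_div, neg_div, Real.rpow_neg (by positivity),
      Real.div_rpow hx.le hy.le]
    nth_rw 2 [hx']
    field_simp

/-- The two bounds are balanced by cutting the integral at the scale where they agree. -/
theorem lintegral_ofReal_inv_mul_le_rpow_mul_rpow (hl : 0 < l) (he : 0 < e)
    (hX : ∀ t, 0 < t → h t ≤ ENNReal.ofReal (t ^ (-l)) * X)
    (hY : ∀ t, 0 < t → h t ≤ ENNReal.ofReal (t ^ e) * Y) :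
    ∫⁻ t in Ioi 0, ENNReal.ofReal t⁻¹ * h t ≤
      ENNReal.ofReal (1 / e + 1 / l) * (X ^ (e / (l + e)) * Y ^ (l / (l + e))) := by
  have hc : ENNReal.ofReal (1 / e + 1 / l) ≠ 0 := (ENNReal.ofReal_pos.2 (by positivity)).ne'
  have he' : 0 < e / (l + e) := by positivity
  have hl' : 0 < l / (l + e) := by positivity
  by_cases hzero : X = 0 ∨ Y = 0
  · have hh : ∀ t ∈ Ioi (0 : ℝ), ENNReal.ofReal t⁻¹ * h t = 0 := fun t ht => by
      obtain rfl | rfl := hzero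
      · simpa using Or.inr (hX t ht)
      · simpa using Or.inr (hY t ht)
    simp [setLIntegral_congr_fun measurableSet_Ioi hh]
  rw [not_or] at hzero
  by_cases htop : X = ∞ ∨ Y = ∞
  · suffices X ^ (e / (l + e)) * Y ^ (l / (l + e)) = ∞ by
      simp only [this, ENNReal.mul_top hc, le_top]
    rw [ENNReal.mul_eq_top]
    simpa [he', hl', he'.not_gt, hl'.not_gt, hzero, or_comm] using htop
  rw [not_or] at htop
  lift X to ℝ≥0 using htop.1
  lift Y to ℝ≥0 using htop.2
  have hXpos : 0 < (X : ℝ) := by simpa [pos_iff_ne_zero] using hzero.1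
  have hYpos : 0 < (Y : ℝ) := by simpa [pos_iff_ne_zero] using hzero.2
  obtain ⟨T, hT, hTY, hTX⟩ := exists_rpow_mul_eq_and_rpow_neg_mul_eq hXpos hYpos hl he
  refine (lintegral_ofReal_inv_mul_le hl he hX hY hT).trans_eq ?_
  simp only [← ENNReal.ofReal_coe_nnreal, ENNReal.ofReal_rpow_of_pos hXpos,
    ENNReal.ofReal_rpow_of_pos hYpos]
  rw [← ENNReal.ofReal_mul (by positivity), ← ENNReal.ofReal_mul (by positivity),
    ← ENNReal.ofReal_mul (by positivity), ← ENNReal.ofReal_mul (by positivity),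
    ← ENNReal.ofReal_add (by positivity) (by positivity), div_mul_eq_mul_div, hTY,
    div_mul_eq_mul_div, hTX]
  ring_nf

end ScaleIntegral

section AnnularDecomposition

/-- A smooth nonnegative cutoff on the line, supported in `[1, 3]`; evaluated at `‖t • ξ‖` it
localizes to frequencies of size `t⁻¹`. -/
def annularBump : ContDiffBump (2 : ℝ) := ⟨1 / 2, 1, by norm_num, by norm_num⟩

lemma annularBump_of_le_one {u : ℝ} (hu : u ≤ 1) : annularBump u = 0 :=
  annularBump.zero_of_le_dist <| by
    change 1 ≤ dist u 2
    rw [Real.dist_eq, le_abs]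
    right; linarith

lemma annularBump_of_three_le {u : ℝ} (hu : 3 ≤ u) : annularBump u = 0 :=
  annularBump.zero_of_le_dist <| by
    change 1 ≤ dist u 2
    rw [Real.dist_eq, le_abs]
    left; linarith

section Symbol

variable {V : Type*} [NormedAddCommGroup V] [InnerProductSpace ℝ V]

lemma contDiff_annularBump_norm_mul_rpow (α : ℝ) {n : ℕ∞} :
    ContDiff ℝ n fun ξ : V => annularBump ‖ξ‖ * ‖ξ‖ ^ α := by
  refine contDiff_iff_contDiffAt.2 fun ξ => ?_
  obtain rfl | hξ := eq_or_ne ξ 0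
  · refine (contDiffAt_const (c := (0 : ℝ))).congr_of_eventuallyEq ?_
    filter_upwards [ball_mem_nhds (0 : V) one_pos] with η hη
    rw [annularBump_of_le_one (mem_ball_zero_iff.1 hη).le, zero_mul]
  · have hnorm : ContDiffAt ℝ n (fun ξ : V => ‖ξ‖) ξ := contDiffAt_norm ℝ hξ
    exact (annularBump.contDiff.contDiffAt.comp ξ hnorm).mul
      (hnorm.rpow_const_of_ne (norm_ne_zero_iff.2 hξ))

variable [FiniteDimensional ℝ V]

lemma hasCompactSupport_annularBump_norm_mul_rpow (α : ℝ) :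
    HasCompactSupport fun ξ : V => annularBump ‖ξ‖ * ‖ξ‖ ^ α := by
  refine HasCompactSupport.intro (isCompact_closedBall (0 : V) 3) fun ξ hξ => ?_
  rw [mem_closedBall_zero_iff, not_le] at hξ
  rw [annularBump_of_three_le hξ.le, zero_mul]

/-- The symbol `|ξ|^α` cut off to an annulus. -/
def annularSymbol (α : ℝ) : 𝓢(V, ℂ) :=
  ((hasCompactSupport_annularBump_norm_mul_rpow α).comp_left Complex.ofReal_zero).toSchwartzMap
    (Complex.ofRealCLM.contDiff.comp (contDiff_annularBump_norm_mul_rpow α))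

lemma annularSymbol_apply (α : ℝ) (ξ : V) :
    annularSymbol α ξ = ((annularBump ‖ξ‖ * ‖ξ‖ ^ α : ℝ) : ℂ) :=
  rfl

end Symbol

/-- The normalizing constant of the continuous decomposition into annuli. -/
def calderonConst : ℝ := ∫ u in Ioi 0, u⁻¹ * annularBump u

lemma integrableOn_inv_mul_annularBump :
    IntegrableOn (fun u => u⁻¹ * annularBump u) (Ioi 0) := by
  have hint : Integrable fun u : ℝ => annularBump ‖u‖ * ‖u‖ ^ (-1 : ℝ) :=
    (contDiff_annularBump_norm_mul_rpow (-1) (n := 0)).continuous.integrable_of_hasCompactSupport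
      (hasCompactSupport_annularBump_norm_mul_rpow (-1))
  refine hint.integrableOn.congr_fun (fun u (hu : 0 < u) => ?_) measurableSet_Ioi
  simp only
  rw [Real.norm_of_nonneg hu.le, Real.rpow_neg_one, mul_comm]

lemma calderonConst_pos : 0 < calderonConst := by
  have hnonneg : 0 ≤ᵐ[volume.restrict (Ioi 0)] fun u => u⁻¹ * annularBump u := by
    filter_upwards [ae_restrict_mem measurableSet_Ioi] with u hu
    exact mul_nonneg (inv_nonneg.2 (mem_Ioi.1 hu).le) annularBump.nonneg
  rw [calderonConst, setIntegral_pos_iff_support_of_nonneg_ae hnonneg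
    integrableOn_inv_mul_annularBump]
  refine (measure_ball_pos volume (2 : ℝ) one_pos).trans_le (measure_mono fun u hu => ?_)
  have hu₀ : 0 < u := by
    rw [mem_ball, Real.dist_eq, abs_lt] at hu
    linarith
  exact ⟨mul_ne_zero (inv_ne_zero hu₀.ne') (annularBump.pos_of_mem_ball hu).ne', hu₀⟩

lemma inv_mul_annularBump_mul (t : ℝ) {b : ℝ} (hb : 0 < b) :
    t⁻¹ * annularBump (t * b) = b * ((t * b)⁻¹ * annularBump (t * b)) := by
  rw [mul_inv]
  field_simp

lemma integrableOn_inv_mul_annularBump_mul {b : ℝ} (hb : 0 < b) :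
    IntegrableOn (fun t => t⁻¹ * annularBump (t * b)) (Ioi 0) := by
  simp_rw [fun t => inv_mul_annularBump_mul t hb]
  refine Integrable.const_mul ?_ b
  exact (integrableOn_Ioi_comp_mul_right_iff _ 0 hb).2
    (by simpa only [zero_mul] using integrableOn_inv_mul_annularBump)

lemma integral_inv_mul_annularBump_mul {b : ℝ} (hb : 0 < b) :
    ∫ t in Ioi 0, t⁻¹ * annularBump (t * b) = calderonConst := by
  simp_rw [fun t => inv_mul_annularBump_mul t hb]
  rw [integral_const_mul, integral_comp_mul_right_Ioi (fun u => u⁻¹ * annularBump u) 0 hb,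
    zero_mul, smul_eq_mul, mul_inv_cancel_left₀ hb.ne', calderonConst]

variable {V F : Type*} [NormedAddCommGroup V] [MeasurableSpace V] [BorelSpace V]
  {μ : Measure V} [NullSingletonClass μ] [NormedAddCommGroup F] [NormedSpace ℝ F] {g : V → F}

lemma integrable_inv_mul_annularBump_smul (hg : Integrable g μ) :
    Integrable (fun z : V × ℝ => (z.2⁻¹ * annularBump (z.2 * ‖z.1‖)) • g z.1)
      (μ.prod (volume.restrict (Ioi (0 : ℝ)))) := by
  have hne : ∀ᵐ ξ ∂μ, ξ ≠ 0 := measure_eq_zero_iff_ae_notMem.1 (measure_singleton 0)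
  have hmeas : AEStronglyMeasurable (fun z : V × ℝ => (z.2⁻¹ * annularBump (z.2 * ‖z.1‖)) • g z.1)
      (μ.prod (volume.restrict (Ioi (0 : ℝ)))) := by
    have hbump := annularBump.continuous.measurable
    refine AEStronglyMeasurable.smul ?_ hg.1.comp_fst
    exact (by fun_prop : Measurable fun z : V × ℝ =>
      z.2⁻¹ * annularBump (z.2 * ‖z.1‖)).aestronglyMeasurable
  rw [integrable_prod_iff hmeas]
  constructor
  · filter_upwards [hne] with ξ hξ
    exact (integrableOn_inv_mul_annularBump_mul (norm_pos_iff.2 hξ)).smul_const (g ξ)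
  · refine (hg.norm.const_mul calderonConst).congr ?_
    filter_upwards [hne] with ξ hξ
    rw [← integral_inv_mul_annularBump_mul (norm_pos_iff.2 hξ), ← integral_mul_const]
    refine setIntegral_congr_fun measurableSet_Ioi fun t ht => ?_
    rw [norm_smul, Real.norm_of_nonneg
      (mul_nonneg (inv_nonneg.2 (mem_Ioi.1 ht).le) annularBump.nonneg)]

theorem calderonConst_smul_integral_eq [NormedSpace ℝ V] [SFinite μ] [CompleteSpace F]
    (hg : Integrable g μ) :
    calderonConst • ∫ ξ, g ξ ∂μ =
      ∫ t in Ioi (0 : ℝ), t⁻¹ • ∫ ξ, annularBump ‖t • ξ‖ • g ξ ∂μ := by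
  have hne : ∀ᵐ ξ ∂μ, ξ ≠ 0 := measure_eq_zero_iff_ae_notMem.1 (measure_singleton 0)
  calc calderonConst • ∫ ξ, g ξ ∂μ
      = ∫ ξ, (∫ t in Ioi (0 : ℝ), (t⁻¹ * annularBump (t * ‖ξ‖)) • g ξ) ∂μ := by
        rw [← integral_smul]
        refine integral_congr_ae ?_
        filter_upwards [hne] with ξ hξ
        rw [integral_smul_const, integral_inv_mul_annularBump_mul (norm_pos_iff.2 hξ)]
    _ = ∫ t in Ioi (0 : ℝ), ∫ ξ, (t⁻¹ * annularBump (t * ‖ξ‖)) • g ξ ∂μ :=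
        integral_integral_swap (integrable_inv_mul_annularBump_smul hg)
    _ = _ := by
        refine setIntegral_congr_fun measurableSet_Ioi fun t ht => ?_
        simp only [mul_smul, norm_smul, Real.norm_of_nonneg (mem_Ioi.1 ht).le, integral_smul]

end AnnularDecomposition

section FrequencyBlock

variable {V F : Type*} [NormedAddCommGroup V] [InnerProductSpace ℝ V] [FiniteDimensional ℝ V]
  [MeasurableSpace V] [BorelSpace V] [NormedAddCommGroup F] [NormedSpace ℂ F]

lemma integrable_fourierChar_inner_smul {w : V → F} (hw : Integrable w) (x : V) :
    Integrable fun ξ => Real.fourierChar (inner ℝ ξ x) • w ξ := by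
  simpa using (Real.fourierIntegral_convergent_iff (-x)).2 hw

lemma continuous_fourierInv {w : V → F} (hw : Integrable w) : Continuous (𝓕⁻ w) := by
  rw [Real.fourierInv_eq_fourier_comp_neg]
  exact VectorFourier.fourierIntegral_continuous Real.continuous_fourierChar
    (innerSL ℝ).continuous₂ hw.comp_neg

lemma integrable_norm_rpow_smul {α : ℝ} (hα : 0 ≤ α) (φ : 𝓢(V, F)) :
    Integrable fun ξ => (‖ξ‖ ^ α : ℝ) • φ ξ := by
  obtain ⟨n, hn⟩ := exists_nat_ge α
  have hbound (ξ : V) : ‖ξ‖ ^ α ≤ 1 + ‖ξ‖ ^ n := by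
    obtain h | h := le_total ‖ξ‖ 1
    · exact (Real.rpow_le_one (norm_nonneg ξ) h hα).trans (le_add_of_nonneg_right (by positivity))
    · rw [← Real.rpow_natCast]
      exact (Real.rpow_le_rpow_of_exponent_le h hn).trans (le_add_of_nonneg_left zero_le_one)
  refine (φ.integrable.norm.add (φ.integrable_pow_mul volume n)).mono' ?_ (ae_of_all _ fun ξ => ?_)
  · exact (by fun_prop : Measurable fun ξ : V => ‖ξ‖ ^ α).aestronglyMeasurable.smul
      φ.continuous.aestronglyMeasurable
  · calc ‖(‖ξ‖ ^ α : ℝ) • φ ξ‖ = ‖ξ‖ ^ α * ‖φ ξ‖ := by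
          rw [norm_smul, Real.norm_of_nonneg (by positivity)]
      _ ≤ (1 + ‖ξ‖ ^ n) * ‖φ ξ‖ := by
          gcongr
          exact hbound ξ
      _ = ‖φ ξ‖ + ‖ξ‖ ^ n * ‖φ ξ‖ := by ring

/-- The piece of the inverse Fourier transform of `w` carried by frequencies of size `t⁻¹`. -/
def frequencyBlock (t : ℝ) (w : V → F) : V → F :=
  𝓕⁻ fun ξ => annularBump ‖t • ξ‖ • w ξ

lemma frequencyBlock_norm_rpow_smul {t : ℝ} (ht : 0 < t) (α : ℝ) (w : V → F) :
    frequencyBlock t (fun ξ => (‖ξ‖ ^ α : ℝ) • w ξ) =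
      (t ^ (-α) : ℝ) • 𝓕⁻ fun ξ => annularSymbol α (t • ξ) • w ξ := by
  ext x
  rw [frequencyBlock, Pi.smul_apply, Real.fourierInv_eq, Real.fourierInv_eq, ← integral_smul]
  refine integral_congr_ae (ae_of_all _ fun ξ => ?_)
  have hscale : t ^ (-α) * ‖t • ξ‖ ^ α = ‖ξ‖ ^ α := by
    rw [norm_smul, Real.norm_of_nonneg ht.le, Real.mul_rpow ht.le (norm_nonneg _), ← mul_assoc,
      ← Real.rpow_add ht, neg_add_cancel, Real.rpow_zero, one_mul]
  simp only
  rw [annularSymbol_apply, Complex.coe_smul, smul_comm _ (Real.fourierChar _), smul_smul,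
    smul_smul, mul_left_comm, hscale]

variable [CompleteSpace F]

theorem ofReal_calderonConst_mul_enorm_fourierInv_le [Nontrivial V] {w : V → F}
    (hw : Integrable w) (x : V) :
    ENNReal.ofReal calderonConst * ‖𝓕⁻ w x‖ₑ ≤
      ∫⁻ t in Ioi (0 : ℝ), ENNReal.ofReal t⁻¹ * ‖frequencyBlock t w x‖ₑ := by
  have hrep : calderonConst • 𝓕⁻ w x = ∫ t in Ioi (0 : ℝ), t⁻¹ • frequencyBlock t w x := by
    simp only [frequencyBlock, Real.fourierInv_eq, smul_comm _ (annularBump _)]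
    exact calderonConst_smul_integral_eq (integrable_fourierChar_inner_smul hw x)
  calc ENNReal.ofReal calderonConst * ‖𝓕⁻ w x‖ₑ = ‖calderonConst • 𝓕⁻ w x‖ₑ := by
        rw [enorm_smul, Real.enorm_of_nonneg calderonConst_pos.le]
    _ ≤ ∫⁻ t in Ioi (0 : ℝ), ‖t⁻¹ • frequencyBlock t w x‖ₑ := by
        rw [hrep]
        exact enorm_integral_le_lintegral_enorm _
    _ = _ := by
        refine setLIntegral_congr_fun measurableSet_Ioi fun t ht => ?_
        rw [enorm_smul, Real.enorm_of_nonneg (inv_nonneg.2 (mem_Ioi.1 ht).le)]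

lemma fourierInv_fourier_comp_smul_smul {K : V → ℂ} {w : V → F} (hK : Integrable K)
    (hw : Integrable w) (t : ℝ) (x : V) :
    𝓕⁻ (fun ξ => 𝓕 K (t • ξ) • w ξ) x = ∫ y, K y • 𝓕⁻ w (x - t • y) := by
  have hcont : Continuous fun z : V × V => (t • innerₗ V) z.1 z.2 := by
    simp only [LinearMap.smul_apply, innerₗ_apply_apply, smul_eq_mul]
    fun_prop
  have hflip := VectorFourier.integral_fourierIntegral_smul_eq_flip (L := t • innerₗ V)
    Real.continuous_fourierChar hcont hK (integrable_fourierChar_inner_smul hw x)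
  convert hflip using 1
  · rw [Real.fourierInv_eq]
    congr with ξ
    rw [smul_comm, Real.fourier_eq]
    simp [VectorFourier.fourierIntegral, inner_smul_right]
  · congr with y
    rw [Real.fourierInv_eq]
    congr 1
    refine integral_congr_ae (ae_of_all _ fun ξ => ?_)
    simp only
    rw [smul_smul, ← AddChar.map_add_eq_mul, inner_sub_right, inner_smul_right, sub_eq_neg_add]
    simp [real_inner_comm]

theorem exists_enorm_frequencyBlock_le (α : ℝ) {q τ : ℝ} (hq : 1 < q) (hτ₀ : 0 ≤ τ)
    (hτ₁ : τ ≤ 1) :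
    ∃ C : ℝ≥0, ∀ w : V → F, Integrable w → ∀ x, ∀ t : ℝ, 0 < t →
      ‖frequencyBlock t (fun ξ => (‖ξ‖ ^ α : ℝ) • w ξ) x‖ₑ ≤
        ENNReal.ofReal (t ^ (-(α + (1 - τ) * (finrank ℝ V / q)))) *
          (C * (maximalFunction volume (fun y => ‖𝓕⁻ w y‖ₑ) x ^ τ *
            eLpNorm (𝓕⁻ w) (ENNReal.ofReal q) volume ^ (1 - τ))) := by
  set K : 𝓢(V, ℂ) := 𝓕⁻ (annularSymbol α : 𝓢(V, ℂ))
  obtain ⟨C, hC⟩ := exists_lintegral_enorm_mul_comp_sub_smul_le (μ := volume) K hq hτ₀ hτ₁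
  refine ⟨C, fun w hw x t ht => ?_⟩
  have hK : 𝓕 (K : V → ℂ) = annularSymbol α := by
    rw [← SchwartzMap.fourier_coe, fourier_fourierInv_eq]
  calc ‖frequencyBlock t (fun ξ => (‖ξ‖ ^ α : ℝ) • w ξ) x‖ₑ
      = ENNReal.ofReal (t ^ (-α)) * ‖∫ y, K y • 𝓕⁻ w (x - t • y)‖ₑ := by
        rw [frequencyBlock_norm_rpow_smul ht, ← hK, Pi.smul_apply, enorm_smul,
          Real.enorm_of_nonneg (by positivity), fourierInv_fourier_comp_smul_smul K.integrable hw]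
    _ ≤ ENNReal.ofReal (t ^ (-α)) * ∫⁻ y, ‖K y‖ₑ * ‖𝓕⁻ w (x - t • y)‖ₑ := by
        gcongr
        simp only [← enorm_smul]
        exact enorm_integral_le_lintegral_enorm _
    _ ≤ ENNReal.ofReal (t ^ (-α)) * (ENNReal.ofReal (t ^ (-((1 - τ) * (finrank ℝ V / q)))) *
          (C * (maximalFunction volume (fun y => ‖𝓕⁻ w y‖ₑ) x ^ τ *
            eLpNorm (fun y => ‖𝓕⁻ w y‖ₑ) (ENNReal.ofReal q) volume ^ (1 - τ)))) := by
        gcongr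
        exact hC _ (continuous_fourierInv hw).enorm.measurable x t ht
    _ = _ := by
        rw [← mul_assoc, ← ENNReal.ofReal_mul (by positivity), ← Real.rpow_add ht, neg_add,
          eLpNorm_enorm]

end FrequencyBlock

section GagliardoNirenberg

lemma eLpNorm_le_of_enorm_le_rpow_mul_rpow {X G : Type*} [MeasurableSpace X] {μ : Measure X}
    [NormedAddCommGroup G] {u : X → G} {M N : X → ℝ≥0∞} (hM : Measurable M) (hN : Measurable N)
    {p q r α β : ℝ} (hp : 0 < p) (hq : 0 < q) (hr : 0 < r) (hα : 0 ≤ α) (hβ : 0 ≤ β)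
    (hpqr : 1 / p = α / q + β / r) {Z : ℝ≥0∞} (hu : ∀ x, ‖u x‖ₑ ≤ Z * (M x ^ α * N x ^ β)) :
    eLpNorm u (ENNReal.ofReal p) μ ≤
      Z * (eLpNorm M (ENNReal.ofReal q) μ ^ α * eLpNorm N (ENNReal.ofReal r) μ ^ β) := by
  have hsum : p * (α / q) + p * (β / r) = 1 := by
    rw [← mul_add, ← hpqr, mul_one_div_cancel hp.ne']
  have hpow (y : ℝ≥0∞) {c m : ℝ} (hm : 0 < m) : (y ^ m) ^ (p * (c / m)) = (y ^ c) ^ p := by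
    rw [← ENNReal.rpow_mul, ← ENNReal.rpow_mul]
    field_simp
  rw [eLpNorm_ofReal_exponent hp, eLpNorm_ofReal_exponent hq, eLpNorm_ofReal_exponent hr]
  simp only [enorm_eq_self]
  calc (∫⁻ x, ‖u x‖ₑ ^ p ∂μ) ^ (1 / p)
      ≤ (∫⁻ x, (Z * (M x ^ α * N x ^ β)) ^ p ∂μ) ^ (1 / p) := by
        gcongr with x
        exact hu x
    _ = (Z ^ p * ∫⁻ x, (M x ^ q) ^ (p * (α / q)) * (N x ^ r) ^ (p * (β / r)) ∂μ) ^ (1 / p) := by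
        rw [← lintegral_const_mul _ (by fun_prop)]
        simp only [hpow _ hq, hpow _ hr, ENNReal.mul_rpow_of_nonneg _ _ hp.le]
    _ ≤ (Z ^ p * ((∫⁻ x, M x ^ q ∂μ) ^ (p * (α / q)) *
          (∫⁻ x, N x ^ r ∂μ) ^ (p * (β / r)))) ^ (1 / p) := by
        gcongr
        exact ENNReal.lintegral_mul_norm_pow_le (by fun_prop) (by fun_prop) (by positivity)
          (by positivity) hsum
    _ = _ := by
        simp only [ENNReal.mul_rpow_of_nonneg _ _ (one_div_nonneg.2 hp.le), ← ENNReal.rpow_mul]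
        field_simp
        rw [ENNReal.rpow_one]

lemma ennreal_rpow_one_sub_mul_mul_rpow_mul (y : ℝ≥0∞) {τ c : ℝ} (hτ₀ : 0 ≤ τ) (hτ₁ : τ ≤ 1)
    (hc : 0 ≤ c) : y ^ ((1 - τ) * c) * y ^ (τ * c) = y ^ c := by
  rw [← ENNReal.rpow_add_of_nonneg _ _ (mul_nonneg (sub_nonneg.2 hτ₁) hc) (mul_nonneg hτ₀ hc),
    ← add_mul, sub_add_cancel, one_mul]

theorem exists_eLpNorm_le_of_enorm_le_maximalFunction {E : Type*} [NormedAddCommGroup E]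
    [NormedSpace ℝ E] [FiniteDimensional ℝ E] [MeasurableSpace E] [BorelSpace E] (μ : Measure E)
    [μ.IsAddHaarMeasure] {G : Type*} [NormedAddCommGroup G] {p q r τ θ : ℝ} (hp : 0 < p)
    (hq : 1 < q) (hr : 1 < r) (hτ₀ : 0 ≤ τ) (hτ₁ : τ ≤ 1) (hθ₀ : 0 ≤ θ) (hθ₁ : θ ≤ 1)
    (hpqr : 1 / p = τ * ((1 - θ) / q + θ / r)) :
    ∃ C : ℝ≥0, ∀ {u : E → G} {f g : E → ℝ≥0∞} {Z : ℝ≥0∞},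
      Measurable f → Measurable g →
      (∀ x, ‖u x‖ₑ ≤
        Z * ((maximalFunction μ f x ^ τ * eLpNorm f (ENNReal.ofReal q) μ ^ (1 - τ)) ^ (1 - θ) *
          (maximalFunction μ g x ^ τ * eLpNorm g (ENNReal.ofReal r) μ ^ (1 - τ)) ^ θ)) →
      eLpNorm u (ENNReal.ofReal p) μ ≤ Z * C *
        (eLpNorm f (ENNReal.ofReal q) μ ^ (1 - θ) * eLpNorm g (ENNReal.ofReal r) μ ^ θ) := by
  obtain ⟨A, hA⟩ := exists_eLpNorm_maximalFunction_le μ hq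
  obtain ⟨B, hB⟩ := exists_eLpNorm_maximalFunction_le μ hr
  refine ⟨A ^ (τ * (1 - θ)) * B ^ (τ * θ), fun {u f g Z} hf hg hu => ?_⟩
  have hθ : 0 ≤ 1 - θ := sub_nonneg.2 hθ₁
  set P := eLpNorm f (ENNReal.ofReal q) μ
  set Q := eLpNorm g (ENNReal.ofReal r) μ
  have hu' (x : E) : ‖u x‖ₑ ≤ Z * (P ^ ((1 - τ) * (1 - θ)) * Q ^ ((1 - τ) * θ)) *
      (maximalFunction μ f x ^ (τ * (1 - θ)) * maximalFunction μ g x ^ (τ * θ)) := by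
    refine (hu x).trans_eq ?_
    simp only [ENNReal.mul_rpow_of_nonneg _ _ hθ, ENNReal.mul_rpow_of_nonneg _ _ hθ₀,
      ← ENNReal.rpow_mul]
    ring
  calc eLpNorm u (ENNReal.ofReal p) μ
      ≤ Z * (P ^ ((1 - τ) * (1 - θ)) * Q ^ ((1 - τ) * θ)) *
          (eLpNorm (maximalFunction μ f) (ENNReal.ofReal q) μ ^ (τ * (1 - θ)) *
            eLpNorm (maximalFunction μ g) (ENNReal.ofReal r) μ ^ (τ * θ)) :=
        eLpNorm_le_of_enorm_le_rpow_mul_rpow (measurable_maximalFunction f)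
          (measurable_maximalFunction g) hp (by positivity) (by positivity) (by positivity)
          (by positivity) (by rw [hpqr]; ring) hu'
    _ ≤ Z * (P ^ ((1 - τ) * (1 - θ)) * Q ^ ((1 - τ) * θ)) *
          ((A * P) ^ (τ * (1 - θ)) * (B * Q) ^ (τ * θ)) := by
        gcongr
        exacts [hA f hf, hB g hg]
    _ = Z * (A ^ (τ * (1 - θ)) * B ^ (τ * θ) : ℝ≥0) *
          ((P ^ ((1 - τ) * (1 - θ)) * P ^ (τ * (1 - θ))) *
            (Q ^ ((1 - τ) * θ) * Q ^ (τ * θ))) := by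
        rw [ENNReal.mul_rpow_of_nonneg _ _ (by positivity),
          ENNReal.mul_rpow_of_nonneg _ _ (by positivity), ENNReal.coe_mul,
          ENNReal.coe_rpow_of_nonneg _ (by positivity),
          ENNReal.coe_rpow_of_nonneg _ (by positivity)]
        ring
    _ = _ := by rw [ennreal_rpow_one_sub_mul_mul_rpow_mul P hτ₀ hτ₁ hθ,
          ennreal_rpow_one_sub_mul_mul_rpow_mul Q hτ₀ hτ₁ hθ₀]

lemma exists_interpolation_exponent {n a b p q r θ : ℝ} (hn : 0 < n) (hp : 0 < p) (hq : 0 < q)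
    (hr : 0 < r) (hθ₀ : 0 < θ) (hθ₁ : θ < 1) (hab : a ≤ θ * b)
    (hscale : a - n / p = θ * (b - n / r) - (1 - θ) * (n / q)) :
    ∃ τ, 0 ≤ τ ∧ τ ≤ 1 ∧ 1 / p = τ * ((1 - θ) / q + θ / r) ∧
      (1 - θ) * (a + (1 - τ) * (n / q)) = θ * (b - a - (1 - τ) * (n / r)) := by
  set S := (1 - θ) / q + θ / r with hS_def
  have hS : 0 < S := add_pos (div_pos (sub_pos.2 hθ₁) hq) (by positivity)
  have hτS : 1 / p / S * S = 1 / p := div_mul_cancel₀ _ hS.ne'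
  have hgap : n * (S - 1 / p) = θ * b - a := by
    linear_combination hscale + n * hS_def
  refine ⟨1 / p / S, by positivity, (div_le_one hS).2 <| sub_nonneg.1 <|
    nonneg_of_mul_nonneg_right (hgap ▸ sub_nonneg.2 hab) hn, hτS.symm, ?_⟩
  linear_combination hgap - n * hτS - n * (1 - 1 / p / S) * hS_def

variable {V F : Type*} [NormedAddCommGroup V] [InnerProductSpace ℝ V] [FiniteDimensional ℝ V]
  [MeasurableSpace V] [BorelSpace V] [NormedAddCommGroup F] [NormedSpace ℂ F]

/-- The fractional derivative `D^α ψ`: the Fourier multiplier with symbol `|ξ|^α`, for functions on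
any finite-dimensional inner product space. `Dop` is the case of `EuclideanSpace ℝ (Fin d)`. -/
def fracDeriv (α : ℝ) (ψ : V → F) : V → F :=
  𝓕⁻ fun ξ => (‖ξ‖ ^ α : ℝ) • 𝓕 ψ ξ

lemma integrable_norm_rpow_smul_fourier {α : ℝ} (hα : 0 ≤ α) (ψ : 𝓢(V, F)) :
    Integrable fun ξ => (‖ξ‖ ^ α : ℝ) • 𝓕 (ψ : V → F) ξ := by
  rw [← SchwartzMap.fourier_coe]
  exact integrable_norm_rpow_smul hα _

variable [CompleteSpace F]

lemma fracDeriv_zero (ψ : 𝓢(V, F)) : fracDeriv 0 ψ = ψ := by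
  simp only [fracDeriv, Real.rpow_zero, one_smul, ← SchwartzMap.fourier_coe]
  rw [← SchwartzMap.fourierInv_coe, fourierInv_fourier_eq]

lemma exists_enorm_frequencyBlock_le_fracDeriv {a c : ℝ} (ha : a ≠ 0) (hc : 0 ≤ c) {q τ : ℝ}
    (hq : 1 < q) (hτ₀ : 0 ≤ τ) (hτ₁ : τ ≤ 1) :
    ∃ C : ℝ≥0, ∀ (ψ : 𝓢(V, F)) (x : V) (t : ℝ), 0 < t →
      ‖frequencyBlock t (fun ξ => (‖ξ‖ ^ a : ℝ) • 𝓕 (ψ : V → F) ξ) x‖ₑ ≤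
        ENNReal.ofReal (t ^ (-(a - c + (1 - τ) * (finrank ℝ V / q)))) *
          (C * (maximalFunction volume (fun y => ‖fracDeriv c ψ y‖ₑ) x ^ τ *
            eLpNorm (fracDeriv c ψ) (ENNReal.ofReal q) volume ^ (1 - τ))) := by
  obtain ⟨C, hC⟩ := exists_enorm_frequencyBlock_le (V := V) (F := F) (a - c) hq hτ₀ hτ₁
  refine ⟨C, fun ψ x t ht => ?_⟩
  have hsplit (ξ : V) : ‖ξ‖ ^ a = ‖ξ‖ ^ (a - c) * ‖ξ‖ ^ c := by
    rw [← Real.rpow_add' (norm_nonneg ξ) (by rwa [sub_add_cancel]), sub_add_cancel]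
  simp only [hsplit, mul_smul]
  exact hC _ (integrable_norm_rpow_smul_fourier hc ψ) x t ht

theorem exists_enorm_fracDeriv_le [Nontrivial V] {a b q r τ θ : ℝ} (ha : 0 < a) (hq : 1 < q)
    (hr : 1 < r) (hτ₀ : 0 ≤ τ) (hτ₁ : τ ≤ 1) (hθ₀ : 0 < θ) (hθ₁ : θ < 1)
    (hscale : (1 - θ) * (a + (1 - τ) * (finrank ℝ V / q)) =
      θ * (b - a - (1 - τ) * (finrank ℝ V / r))) :
    ∃ C : ℝ≥0, ∀ (ψ : 𝓢(V, F)) (x : V), ‖fracDeriv a ψ x‖ₑ ≤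
      C * ((maximalFunction volume (fun y => ‖ψ y‖ₑ) x ^ τ *
          eLpNorm ψ (ENNReal.ofReal q) volume ^ (1 - τ)) ^ (1 - θ) *
        (maximalFunction volume (fun y => ‖fracDeriv b ψ y‖ₑ) x ^ τ *
          eLpNorm (fracDeriv b ψ) (ENNReal.ofReal r) volume ^ (1 - τ)) ^ θ) := by
  set n : ℝ := (finrank ℝ V : ℝ)
  set l := a + (1 - τ) * (n / q)
  set e := b - a - (1 - τ) * (n / r)
  have hn (m : ℝ) (hm : 1 < m) : 0 ≤ (1 - τ) * (n / m) :=
    mul_nonneg (sub_nonneg.2 hτ₁) (by positivity)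
  have hl : 0 < l := add_pos_of_pos_of_nonneg ha (hn q hq)
  have he : 0 < e := pos_of_mul_pos_right (hscale ▸ mul_pos (sub_pos.2 hθ₁) hl) hθ₀.le
  have hb : 0 ≤ b := by linarith [hn r hr]
  have hθ : l / (l + e) = θ := (div_eq_iff (by positivity)).2 (by linarith)
  have hθ' : e / (l + e) = 1 - θ := (div_eq_iff (by positivity)).2 (by linarith)
  obtain ⟨C₁, h₁⟩ :=
    exists_enorm_frequencyBlock_le_fracDeriv (V := V) (F := F) ha.ne' le_rfl hq hτ₀ hτ₁
  obtain ⟨C₂, h₂⟩ :=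
    exists_enorm_frequencyBlock_le_fracDeriv (V := V) (F := F) ha.ne' hb hr hτ₀ hτ₁
  simp only [fracDeriv_zero, sub_zero] at h₁
  simp only [neg_add, neg_sub, ← sub_eq_add_neg] at h₂
  refine ⟨(calderonConst⁻¹ * (1 / e + 1 / l)).toNNReal * (C₁ ^ (1 - θ) * C₂ ^ θ), fun ψ x => ?_⟩
  have hbalanced := (ofReal_calderonConst_mul_enorm_fourierInv_le
    (integrable_norm_rpow_smul_fourier ha.le ψ) x).trans
    (lintegral_ofReal_inv_mul_le_rpow_mul_rpow hl he (h₁ ψ x) (h₂ ψ x))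
  rw [hθ, hθ', mul_comm, ← ENNReal.le_div_iff_mul_le (.inl (by simpa using calderonConst_pos))
    (.inl ENNReal.ofReal_ne_top)] at hbalanced
  refine hbalanced.trans_eq ?_
  simp only [ENNReal.mul_rpow_of_nonneg _ _ (sub_pos.2 hθ₁).le,
    ENNReal.mul_rpow_of_nonneg _ _ hθ₀.le, ENNReal.coe_mul, ← ENNReal.ofReal.eq_1,
    ENNReal.ofReal_mul (inv_pos.2 calderonConst_pos).le,
    ENNReal.ofReal_inv_of_pos calderonConst_pos, ENNReal.coe_rpow_of_nonneg _ (sub_pos.2 hθ₁).le,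
    ENNReal.coe_rpow_of_nonneg _ hθ₀.le, div_eq_mul_inv]
  ring

theorem fractional_gagliardo_nirenberg_general [Nontrivial V] {a b p q r θ : ℝ} (ha : 0 < a)
    (hp : 0 < p) (hq : 1 < q) (hr : 1 < r) (hθ₀ : 0 < θ) (hθ₁ : θ < 1) (hab : a ≤ θ * b)
    (hscale : a - finrank ℝ V / p =
      θ * (b - finrank ℝ V / r) - (1 - θ) * (finrank ℝ V / q)) :
    ∃ C : ℝ≥0, ∀ ψ : 𝓢(V, F), eLpNorm (fracDeriv a ψ) (ENNReal.ofReal p) volume ≤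
      C * eLpNorm ψ (ENNReal.ofReal q) volume ^ (1 - θ) *
        eLpNorm (fracDeriv b ψ) (ENNReal.ofReal r) volume ^ θ := by
  obtain ⟨τ, hτ₀, hτ₁, hpqr, hbalance⟩ := exists_interpolation_exponent
    (Nat.cast_pos.2 finrank_pos) hp (by positivity) (by positivity) hθ₀ hθ₁ hab hscale
  obtain ⟨Z, hZ⟩ := exists_enorm_fracDeriv_le (V := V) (F := F) ha hq hr hτ₀ hτ₁ hθ₀ hθ₁ hbalance
  obtain ⟨C, hC⟩ := exists_eLpNorm_le_of_enorm_le_maximalFunction (volume : Measure V) (G := F) hp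
    hq hr hτ₀ hτ₁ hθ₀.le hθ₁.le hpqr
  refine ⟨Z * C, fun ψ => ?_⟩
  have hb : 0 ≤ b := (pos_of_mul_pos_right (ha.trans_le hab) hθ₀.le).le
  have hDψ : Continuous (fracDeriv b ψ) :=
    continuous_fourierInv (integrable_norm_rpow_smul_fourier hb ψ)
  have hbound := hC ψ.continuous.enorm.measurable hDψ.enorm.measurable
    (by simpa only [eLpNorm_enorm] using hZ ψ)
  rwa [eLpNorm_enorm, eLpNorm_enorm, ← mul_assoc, ← ENNReal.coe_mul] at hbound

end GagliardoNirenberg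

lemma exponent_relations_of_theta_eq {d s lam p θ : ℝ} (hs : 0 < s) (hlam₁ : lam < d) (hp : 0 < p)
    (hθ : θ = (2 * d - 2 * p * d + p * lam) / (d - 2 * p * s - p * d + p * lam))
    (hθ₁ : (d - lam) / (d + 2 * s - lam) ≤ θ) :
    0 < θ ∧ (d - lam) / 2 ≤ θ * (s + (d - lam) / 2) ∧
      (d - lam) / 2 - d / p =
        θ * (s + (d - lam) / 2 - d / (2 * p / (p + 1))) - (1 - θ) * (d / 2) := by
  have hden : 0 < d + 2 * s - lam := by linarith
  have hθ₀ : 0 < θ := (div_pos (sub_pos.2 hlam₁) hden).trans_le hθ₁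
  have hne : d - 2 * p * s - p * d + p * lam ≠ 0 := fun h => by
    rw [hθ, h, _root_.div_zero] at hθ₀
    exact hθ₀.false
  refine ⟨hθ₀, ?_, ?_⟩
  · linarith [(div_le_iff₀ hden).1 hθ₁]
  · rw [eq_div_iff hne] at hθ
    field_simp
    linarith

/-- Fractional Gagliardo–Nirenberg inequality: for `p ∈ (1,∞)` and
`θ = (2d-2pd+pλ)/(d-2ps-pd+pλ)` with `(d-λ)/(d+2s-λ) ≤ θ < 1`, one has
`‖D^{(d-λ)/2} ψ‖_{L^p} ≤ C ‖ψ‖_{L²}^{1-θ} ‖D^{s+(d-λ)/2} ψ‖_{L^{2p/(p+1)}}^θ`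
for every Schwartz function `ψ`. -/
theorem fractional_gagliardo_nirenberg
    (d : ℕ) (hd : 1 ≤ d) (s lam p θ : ℝ)
    (hs : 0 < s) (hlam₀ : 0 < lam) (hlam₁ : lam < d) (hp : 1 < p)
    (hθ : θ = (2 * d - 2 * p * d + p * lam) / (d - 2 * p * s - p * d + p * lam))
    (hθ₁ : (d - lam) / (d + 2 * s - lam) ≤ θ) (hθ₂ : θ < 1) :
    ∃ C : ℝ, ∀ ψ : SchwartzMap (EuclideanSpace ℝ (Fin d)) ℂ,
      eLpNorm (Dop d ((d - lam) / 2) (fun x => ψ x)) (ENNReal.ofReal p) volume ≤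
        ENNReal.ofReal C * (eLpNorm (fun x => ψ x) 2 volume) ^ (1 - θ) *
          (eLpNorm (Dop d (s + (d - lam) / 2) (fun x => ψ x))
            (ENNReal.ofReal (2 * p / (p + 1))) volume) ^ θ := by
  have : Nonempty (Fin d) := ⟨⟨0, hd⟩⟩
  have hp₀ : 0 < p := zero_lt_one.trans hp
  obtain ⟨hθ₀, hab, hscale⟩ := exponent_relations_of_theta_eq hs hlam₁ hp₀ hθ hθ₁
  have hr : 1 < 2 * p / (p + 1) := (one_lt_div (by positivity)).2 (by linarith)
  obtain ⟨C, hC⟩ := fractional_gagliardo_nirenberg_general (V := EuclideanSpace ℝ (Fin d)) (F := ℂ)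
    (half_pos (sub_pos.2 hlam₁)) hp₀ one_lt_two hr hθ₀ hθ₂ hab
    (by simpa only [finrank_euclideanSpace_fin] using hscale)
  simp only [ENNReal.ofReal_ofNat] at hC
  refine ⟨C, fun ψ => ?_⟩
  rw [ENNReal.ofReal_coe_nnreal]
  exact hC ψ
end
end

section
/- (Fractional Gagliardo–Nirenberg inequality, endpoint p = ∞.) Let d ≥ 1, s > 0, 0 < λ < d, and assume d < 2s. Set θ = (2d−λ)/(d+2s−λ). Then there is a constant C such that for every Schwartz function ψ on ℝ^d: ‖D^{(d−λ)/2} ψ‖_{L^∞} ≤ C · ‖ψ‖_{L^2}^{1−θ} · ‖D^{s+(d−λ)/2} ψ‖_{L^2}^{θ}. -/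
open MeasureTheory SchwartzMap FourierTransform ENNReal

noncomputable section

/-!
On the Fourier side `‖D^α ψ‖_∞ ≤ ‖|ξ|^α ψ̂‖₁`, while by Plancherel `‖ψ‖₂ = ‖ψ̂‖₂` and
`‖D^(s+α) ψ‖₂ = ‖|ξ|^(s+α) ψ̂‖₂`. The theorem is therefore Carlson's inequality
`‖|ξ|^a f‖₁ ≤ C ‖f‖₂^(1-θ) ‖|ξ|^b f‖₂^θ` with `f = ψ̂`, `a = α` and `b = s + α`. To prove the
latter, write `|ξ|^a f` as the product of `|ξ|^a / (1 + |ξ/R|^b)` and `f + R^(-b) |ξ|^b f`, apply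
Hölder's inequality, and optimise in `R`. The weight is square integrable at the origin because
`a > -d/2` and at infinity because `b - a = s > d/2`.
-/

section CarlsonInequality

variable {E F : Type*} [NormedAddCommGroup E] [NormedAddCommGroup F] [NormedSpace ℝ F] {a b : ℝ}

lemma ae_eq_zero_of_norm_rpow_smul_ae_eq_zero [MeasurableSpace E] {μ : Measure E}
    [NullSingletonClass μ] {f : E → F} (h : (fun x ↦ ‖x‖ ^ b • f x) =ᵐ[μ] 0) : f =ᵐ[μ] 0 := by
  filter_upwards [h, μ.ae_ne 0] with x hx hx₀
  exact (smul_eq_zero.1 hx).resolve_left (Real.rpow_pos_of_pos (norm_pos_iff.2 hx₀) b).ne'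

/-- The radial profile of the weight that Hölder's inequality pairs with `(1 + ‖x‖ ^ b) • f x` in
the proof of Carlson's inequality. -/
def carlsonWeight (a b t : ℝ) : ℝ := t ^ a / (1 + t ^ b)

lemma measurable_carlsonWeight (a b : ℝ) : Measurable (carlsonWeight a b) := by
  unfold carlsonWeight
  fun_prop

lemma carlsonWeight_nonneg {t : ℝ} (ht : 0 ≤ t) : 0 ≤ carlsonWeight a b t := by
  unfold carlsonWeight
  positivity

lemma integrableOn_Ioi_rpow_mul_one_add_rpow {u v : ℝ} (hu : -1 < u) (hv : 0 ≤ v)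
    (huv : u - b * v < -1) :
    IntegrableOn (fun t : ℝ ↦ t ^ u * (1 + t ^ b) ^ (-v)) (Set.Ioi 0) := by
  have h_meas : Measurable fun t : ℝ ↦ t ^ u * (1 + t ^ b) ^ (-v) := by fun_prop
  rw [← Set.Ioc_union_Ioi_eq_Ioi zero_le_one]
  refine IntegrableOn.union ?_ ?_
  · have h_int : IntegrableOn (fun t : ℝ ↦ t ^ u) (Set.Ioc 0 1) :=
      (intervalIntegral.intervalIntegrable_rpow' hu).1
    refine Integrable.mono' h_int h_meas.aestronglyMeasurable
      (ae_restrict_of_forall_mem measurableSet_Ioc fun t ht ↦ ?_)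
    have ht₀ : 0 < t := ht.1
    rw [Real.norm_of_nonneg (by positivity)]
    refine mul_le_of_le_one_right (by positivity) ?_
    exact Real.rpow_le_one_of_one_le_of_nonpos (le_add_of_nonneg_right (by positivity))
      (neg_nonpos.2 hv)
  · refine Integrable.mono' (integrableOn_Ioi_rpow_of_lt huv one_pos) h_meas.aestronglyMeasurable
      (ae_restrict_of_forall_mem measurableSet_Ioi fun t ht ↦ ?_)
    have ht₀ : 0 < t := one_pos.trans ht
    rw [Real.norm_of_nonneg (by positivity)]
    calc t ^ u * (1 + t ^ b) ^ (-v) ≤ t ^ u * (t ^ b) ^ (-v) := by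
          gcongr ?_ * ?_
          exact Real.rpow_le_rpow_of_nonpos (by positivity) (by linarith) (neg_nonpos.2 hv)
      _ = t ^ (u - b * v) := by
          rw [← Real.rpow_mul ht₀.le, ← Real.rpow_add ht₀, mul_neg, sub_eq_add_neg]

variable [NormedSpace ℝ E]

lemma norm_rpow_smul_eq_carlsonWeight_smul (a b : ℝ) {R : ℝ} (hR : 0 < R) (x : E) (v : F) :
    ‖x‖ ^ a • v = (R ^ a * carlsonWeight a b ‖R⁻¹ • x‖) • (v + R ^ (-b) • ‖x‖ ^ b • v) := by
  have h_factor : v + R ^ (-b) • ‖x‖ ^ b • v = (1 + (R ^ b)⁻¹ * ‖x‖ ^ b) • v := by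
    rw [Real.rpow_neg hR.le, add_smul, one_smul, smul_smul]
  rw [h_factor, smul_smul, carlsonWeight, norm_smul, norm_inv, Real.norm_of_nonneg hR.le,
    Real.mul_rpow (by positivity) (norm_nonneg x), Real.mul_rpow (by positivity) (norm_nonneg x),
    Real.inv_rpow hR.le, Real.inv_rpow hR.le]
  congr 1
  field_simp

lemma le_mul_rpow_of_forall_le_rpow_mul_add {N K A B : ℝ≥0∞} {c : ℝ} (hb : b ≠ 0)
    (hA₀ : A ≠ 0) (hA : A ≠ ⊤) (hB₀ : B ≠ 0) (hB : B ≠ ⊤)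
    (h : ∀ R : ℝ, 0 < R →
      N ≤ ENNReal.ofReal (R ^ c) * K * (A + ENNReal.ofReal (R ^ (-b)) * B)) :
    N ≤ 2 * K * A ^ (1 - c / b) * B ^ (c / b) := by
  lift A to NNReal using hA
  lift B to NNReal using hB
  have hA_pos : (0 : ℝ) < A := by exact_mod_cast pos_iff_ne_zero.2 hA₀
  have hB_pos : (0 : ℝ) < B := by exact_mod_cast pos_iff_ne_zero.2 hB₀
  set R : ℝ := ((B : ℝ) / A) ^ (1 / b) with hR
  have hRc : R ^ c = (B : ℝ) ^ (c / b) / (A : ℝ) ^ (c / b) := by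
    rw [hR, ← Real.rpow_mul (by positivity), one_div_mul_eq_div, Real.div_rpow hB_pos.le hA_pos.le]
  have hRb : R ^ (-b) = A / B := by
    rw [hR, ← Real.rpow_mul (by positivity), one_div_mul_eq_div, neg_div, div_self hb,
      Real.rpow_neg_one, inv_div]
  have h_balance : ENNReal.ofReal (R ^ c) * (A + ENNReal.ofReal (R ^ (-b)) * B) =
      2 * A ^ (1 - c / b) * B ^ (c / b) := by
    rw [← ENNReal.ofReal_coe_nnreal (p := A), ← ENNReal.ofReal_coe_nnreal (p := B),
      ENNReal.ofReal_rpow_of_pos hA_pos, ENNReal.ofReal_rpow_of_pos hB_pos,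
      ← ENNReal.ofReal_ofNat 2, ← ENNReal.ofReal_mul (by positivity),
      ← ENNReal.ofReal_add (by positivity) (by positivity), ← ENNReal.ofReal_mul (by positivity),
      ← ENNReal.ofReal_mul (by positivity), ← ENNReal.ofReal_mul (by positivity), hRc, hRb,
      Real.rpow_sub hA_pos, Real.rpow_one]
    congr 1
    field_simp
    ring
  calc N ≤ ENNReal.ofReal (R ^ c) * K * (A + ENNReal.ofReal (R ^ (-b)) * B) := h R (by positivity)
    _ = K * (ENNReal.ofReal (R ^ c) * (A + ENNReal.ofReal (R ^ (-b)) * B)) := by ring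
    _ = 2 * K * A ^ (1 - c / b) * B ^ (c / b) := by rw [h_balance]; ring

variable [FiniteDimensional ℝ E] [MeasurableSpace E] [BorelSpace E] {μ : Measure E}
  [μ.IsAddHaarMeasure] {p q r : ℝ≥0∞}

lemma memLp_carlsonWeight_norm [Nontrivial E] (hq₀ : q ≠ 0) (hq : q ≠ ⊤)
    (ha : -(Module.finrank ℝ E / q.toReal) < a) (hab : a + Module.finrank ℝ E / q.toReal < b) :
    MemLp (fun x : E ↦ carlsonWeight a b ‖x‖) q μ := by
  have hq_pos : 0 < q.toReal := ENNReal.toReal_pos hq₀ hq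
  have h_meas : AEStronglyMeasurable (fun x : E ↦ carlsonWeight a b ‖x‖) μ :=
    ((measurable_carlsonWeight a b).comp measurable_norm).aestronglyMeasurable
  have h_pow {t : ℝ} (ht : 0 ≤ t) : ‖carlsonWeight a b t‖ ^ q.toReal =
      t ^ (a * q.toReal) * (1 + t ^ b) ^ (-q.toReal) := by
    rw [Real.norm_of_nonneg (carlsonWeight_nonneg ht), carlsonWeight,
      Real.div_rpow (by positivity) (by positivity), ← Real.rpow_mul ht,
      Real.rpow_neg (by positivity), div_eq_mul_inv]
  rw [← integrable_norm_rpow_iff h_meas hq₀ hq,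
    integrable_fun_norm_addHaar μ (f := fun t ↦ ‖carlsonWeight a b t‖ ^ q.toReal)]
  have h_int : IntegrableOn (fun t : ℝ ↦ t ^ (Module.finrank ℝ E - 1 + a * q.toReal) *
      (1 + t ^ b) ^ (-q.toReal)) (Set.Ioi 0) := by
    rw [← neg_div, div_lt_iff₀ hq_pos] at ha
    rw [← lt_sub_iff_add_lt', div_lt_iff₀ hq_pos] at hab
    exact integrableOn_Ioi_rpow_mul_one_add_rpow (by linarith) hq_pos.le (by linarith)
  refine h_int.congr_fun (fun t ht ↦ ?_) measurableSet_Ioi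
  dsimp only
  rw [h_pow (le_of_lt ht), smul_eq_mul, ← mul_assoc, Real.rpow_add ht, ← Real.rpow_natCast,
    Nat.cast_pred Module.finrank_pos]

lemma eLpNorm_comp_inv_smul {G : Type*} [NormedAddCommGroup G] {g : E → G}
    (hg : StronglyMeasurable g) (hq : q ≠ ⊤) {R : ℝ} (hR : 0 < R) :
    eLpNorm (fun x ↦ g (R⁻¹ • x)) q μ =
      ENNReal.ofReal (R ^ (Module.finrank ℝ E / q.toReal)) * eLpNorm g q μ := by
  have h_map := eLpNorm_map_measure (p := q) (μ := μ) hg.aestronglyMeasurable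
    (measurable_const_smul R⁻¹).aemeasurable
  rw [Measure.map_addHaar_smul μ (inv_ne_zero hR.ne'), eLpNorm_smul_measure_of_ne_top hq] at h_map
  rw [← Function.comp_def g, ← h_map, smul_eq_mul, inv_pow, inv_inv, abs_of_pos (by positivity),
    ENNReal.ofReal_rpow_of_nonneg (by positivity) (by positivity), ← Real.rpow_natCast,
    ← Real.rpow_mul hR.le, ENNReal.toReal_div, ENNReal.toReal_one, mul_one_div]

lemma eLpNorm_norm_rpow_smul_le_add [q.HolderTriple p r] (hq : q ≠ ⊤) (hp : 1 ≤ p) (a b : ℝ)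
    {f : E → F} (hf : AEStronglyMeasurable f μ) {R : ℝ} (hR : 0 < R) :
    eLpNorm (fun x ↦ ‖x‖ ^ a • f x) r μ ≤
      ENNReal.ofReal (R ^ (a + Module.finrank ℝ E / q.toReal)) *
        eLpNorm (fun x : E ↦ carlsonWeight a b ‖x‖) q μ *
        (eLpNorm f p μ + ENNReal.ofReal (R ^ (-b)) * eLpNorm (fun x ↦ ‖x‖ ^ b • f x) p μ) := by
  have hw : Measurable fun x : E ↦ carlsonWeight a b ‖x‖ :=
    (measurable_carlsonWeight a b).comp measurable_norm
  have hfb : AEStronglyMeasurable (fun x ↦ ‖x‖ ^ b • f x) μ :=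
    (measurable_norm.pow_const b).aestronglyMeasurable.smul hf
  set W : E → ℝ := R ^ a • fun x ↦ carlsonWeight a b ‖R⁻¹ • x‖ with hW
  set G : E → F := f + R ^ (-b) • fun x ↦ ‖x‖ ^ b • f x
  have h_factor : (fun x ↦ ‖x‖ ^ a • f x) = W • G :=
    funext fun x ↦ norm_rpow_smul_eq_carlsonWeight_smul a b hR x (f x)
  have hWm : AEStronglyMeasurable W μ :=
    ((hw.comp (measurable_const_smul R⁻¹)).const_smul (R ^ a)).aestronglyMeasurable
  have hW_norm : eLpNorm W q μ = ENNReal.ofReal (R ^ (a + Module.finrank ℝ E / q.toReal)) *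
      eLpNorm (fun x : E ↦ carlsonWeight a b ‖x‖) q μ := by
    rw [hW, eLpNorm_const_smul, eLpNorm_comp_inv_smul hw.stronglyMeasurable hq hR,
      Real.enorm_of_nonneg (by positivity), ← mul_assoc, ← ENNReal.ofReal_mul (by positivity),
      ← Real.rpow_add hR]
  have hG_norm : eLpNorm G p μ ≤
      eLpNorm f p μ + ENNReal.ofReal (R ^ (-b)) * eLpNorm (fun x ↦ ‖x‖ ^ b • f x) p μ := by
    refine (eLpNorm_add_le hf (hfb.const_smul _) hp).trans_eq ?_
    rw [eLpNorm_const_smul, Real.enorm_of_nonneg (by positivity)]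
  calc eLpNorm (fun x ↦ ‖x‖ ^ a • f x) r μ
      ≤ eLpNorm W q μ * eLpNorm G p μ := by
        rw [h_factor]
        exact eLpNorm_smul_le_mul_eLpNorm (hf.add (hfb.const_smul _)) hWm
    _ ≤ _ := by rw [hW_norm]; gcongr

theorem carlson_inequality [Nontrivial E] [q.HolderTriple p r] (hq : q ≠ ⊤) (hp : 1 ≤ p)
    (hb : b ≠ 0) {f : E → F} (hf : MemLp f p μ) (hfb : MemLp (fun x ↦ ‖x‖ ^ b • f x) p μ) :
    eLpNorm (fun x ↦ ‖x‖ ^ a • f x) r μ ≤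
      2 * eLpNorm (fun x : E ↦ carlsonWeight a b ‖x‖) q μ *
        eLpNorm f p μ ^ (1 - (a + Module.finrank ℝ E / q.toReal) / b) *
        eLpNorm (fun x ↦ ‖x‖ ^ b • f x) p μ ^ ((a + Module.finrank ℝ E / q.toReal) / b) := by
  have hp₀ : p ≠ 0 := (one_pos.trans_le hp).ne'
  by_cases hf₀ : f =ᵐ[μ] 0
  · have h_zero : (fun x ↦ ‖x‖ ^ a • f x) =ᵐ[μ] 0 := by
      filter_upwards [hf₀] with x hx
      simp [hx]
    simp [eLpNorm_congr_ae h_zero]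
  refine le_mul_rpow_of_forall_le_rpow_mul_add hb ?_ hf.eLpNorm_ne_top ?_ hfb.eLpNorm_ne_top
    fun R hR ↦ eLpNorm_norm_rpow_smul_le_add hq hp a b hf.1 hR
  · exact mt (eLpNorm_eq_zero_iff hf.1 hp₀).1 hf₀
  · exact mt (fun h ↦ ae_eq_zero_of_norm_rpow_smul_ae_eq_zero
      ((eLpNorm_eq_zero_iff hfb.1 hp₀).1 h)) hf₀

end CarlsonInequality

section FourierInverse

variable {V F : Type*} [NormedAddCommGroup V] [InnerProductSpace ℝ V] [FiniteDimensional ℝ V]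
  [MeasurableSpace V] [BorelSpace V] [NormedAddCommGroup F]

section NormedSpace

variable [NormedSpace ℂ F]

lemma eLpNorm_top_fourierInv_le (g : V → F) : eLpNorm (𝓕⁻ g) ⊤ volume ≤ eLpNorm g 1 volume := by
  refine eLpNormEssSup_le_of_ae_enorm_bound (.of_forall fun x ↦ ?_)
  rw [Real.fourierInv_eq, eLpNorm_one_eq_lintegral_enorm]
  refine (enorm_integral_le_lintegral_enorm _).trans_eq ?_
  simp only [← ofReal_norm, Circle.norm_smul]

lemma continuous_fourierInv_of_integrable {g : V → F} (hg : Integrable g) : Continuous (𝓕⁻ g) :=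
  Real.Lp.fourierTransformInv_toLp (memLp_one_iff_integrable.2 hg) ▸
    BoundedContinuousFunction.continuous _

lemma integral_fourierInv_smul_eq_of_integrable [CompleteSpace F] {φ : V → ℂ} {g : V → F}
    (hφ : Integrable φ) (hg : Integrable g) :
    ∫ x, 𝓕⁻ φ x • g x = ∫ x, φ x • 𝓕⁻ g x := by
  have h_cont : Continuous fun x : V × V ↦ (-innerₗ V) x.1 x.2 := by
    simp only [LinearMap.neg_apply, innerₗ_apply_apply]
    fun_prop
  have h_flip : (-innerₗ V).flip = -innerₗ V := by
    ext x y
    simp [real_inner_comm]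
  have h_swap := VectorFourier.integral_fourierIntegral_smul_eq_flip (μ := volume) (ν := volume)
    Real.continuous_fourierChar h_cont hφ hg
  rwa [h_flip] at h_swap

end NormedSpace

variable [InnerProductSpace ℂ F] [CompleteSpace F]

lemma fourierInv_toLp_ae_eq {g : V → F} (hg : Integrable g) (hg₂ : MemLp g 2) :
    (𝓕⁻ (hg₂.toLp g) : Lp (α := V) F 2) =ᵐ[volume] 𝓕⁻ g := by
  refine ae_eq_of_integral_contDiff_smul_eq ((Lp.memLp _).locallyIntegrable one_le_two)
    (continuous_fourierInv_of_integrable hg).locallyIntegrable fun φ hφ hφ_supp ↦ ?_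
  let Φ : 𝓢(V, ℂ) := (hφ_supp.comp_left (g := Complex.ofRealCLM) rfl).toSchwartzMap
    (Complex.ofRealCLM.contDiff.comp hφ)
  have h_real (u : V → F) : ∫ x, φ x • u x = ∫ x, Φ x • u x := by
    simp [Φ]
  have h_distribution : ∫ x, (𝓕⁻ Φ : 𝓢(V, ℂ)) x • hg₂.toLp g x =
      ∫ x, Φ x • (𝓕⁻ (hg₂.toLp g) : Lp (α := V) F 2 volume) x := by
    simpa only [TemperedDistribution.fourierInv_apply, Lp.toTemperedDistribution_apply] using
      DFunLike.congr_fun (Lp.fourierInv_toTemperedDistribution_eq (hg₂.toLp g)) Φ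
  have h_toLp : ∫ x, (𝓕⁻ Φ : 𝓢(V, ℂ)) x • hg₂.toLp g x = ∫ x, 𝓕⁻ (Φ : V → ℂ) x • g x := by
    refine integral_congr_ae ?_
    filter_upwards [hg₂.coeFn_toLp] with x hx
    rw [hx, SchwartzMap.fourierInv_coe]
  rw [h_real, h_real, ← h_distribution, h_toLp,
    integral_fourierInv_smul_eq_of_integrable Φ.integrable hg]

theorem eLpNorm_two_fourierInv {g : V → F} (hg : Integrable g) (hg₂ : MemLp g 2) :
    eLpNorm (𝓕⁻ g) 2 volume = eLpNorm g 2 volume := by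
  have h_isometry : ‖𝓕⁻ (hg₂.toLp g)‖ = ‖hg₂.toLp g‖ :=
    (Lp.fourierTransformₗᵢ V F).symm.norm_map _
  rw [← eLpNorm_congr_ae (fourierInv_toLp_ae_eq hg hg₂), ← eLpNorm_congr_ae hg₂.coeFn_toLp,
    ← Lp.enorm_def, ← Lp.enorm_def, ← ofReal_norm, ← ofReal_norm, h_isometry]

lemma eLpNorm_two_fourier_schwartz (f : 𝓢(V, F)) :
    eLpNorm (𝓕 f : 𝓢(V, F)) 2 volume = eLpNorm f 2 volume := by
  rw [← eLpNorm_two_fourierInv (𝓕 f : 𝓢(V, F)).integrable ((𝓕 f).memLp 2),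
    ← SchwartzMap.fourierInv_coe, fourierInv_fourier_eq]

end FourierInverse

section FractionalDerivative

lemma memLp_norm_rpow_smul_schwartz {E F : Type*} [NormedAddCommGroup E] [InnerProductSpace ℝ E]
    [MeasurableSpace E] [BorelSpace E] [NormedAddCommGroup F]
    [NormedSpace ℝ F] [SecondCountableTopologyEither E F] {μ : Measure E} [μ.HasTemperateGrowth]
    {b : ℝ} (hb : 0 ≤ b) (f : 𝓢(E, F)) (p : ℝ≥0∞) :
    MemLp (fun x ↦ ‖x‖ ^ b • f x) p μ := by
  refine MemLp.of_le ((smulLeftCLM F fun x : E ↦ (1 + ‖x‖ ^ 2) ^ b) f |>.memLp p μ) ?_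
    (.of_forall fun x ↦ ?_)
  · exact (measurable_norm.pow_const b).aestronglyMeasurable.smul
      f.continuous.aestronglyMeasurable
  · rw [smulLeftCLM_apply_apply (by fun_prop), norm_smul, norm_smul,
      Real.norm_of_nonneg (by positivity), Real.norm_of_nonneg (by positivity)]
    gcongr
    nlinarith [sq_nonneg (‖x‖ - 1)]

variable {d : ℕ}

lemma eLpNorm_top_Dop_le (α : ℝ) (ψ : EuclideanSpace ℝ (Fin d) → ℂ) :
    eLpNorm (Dop d α ψ) ⊤ volume ≤ eLpNorm (fun ξ ↦ ‖ξ‖ ^ α • 𝓕 ψ ξ) 1 volume :=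
  eLpNorm_top_fourierInv_le _

lemma eLpNorm_two_Dop {α : ℝ} (hα : 0 ≤ α) (ψ : 𝓢(EuclideanSpace ℝ (Fin d), ℂ)) :
    eLpNorm (Dop d α ψ) 2 volume = eLpNorm (fun ξ ↦ ‖ξ‖ ^ α • (𝓕 ψ) ξ) 2 volume := by
  rw [Dop, ← SchwartzMap.fourier_coe]
  exact eLpNorm_two_fourierInv
    (memLp_one_iff_integrable.1 (memLp_norm_rpow_smul_schwartz hα (𝓕 ψ) 1))
    (memLp_norm_rpow_smul_schwartz hα (𝓕 ψ) 2)

end FractionalDerivative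

theorem fractional_gagliardo_nirenberg_endpoint_general
    (d : ℕ) (hd : 1 ≤ d) (s α θ : ℝ) (hα : -(d : ℝ) < 2 * α) (hds : (d : ℝ) < 2 * s)
    (hθ : θ = (d + 2 * α) / (2 * (s + α))) :
    ∃ C : ℝ, ∀ ψ : SchwartzMap (EuclideanSpace ℝ (Fin d)) ℂ,
      eLpNorm (Dop d α (fun x => ψ x)) ⊤ volume ≤
        ENNReal.ofReal C * (eLpNorm (fun x => ψ x) 2 volume) ^ (1 - θ) *
          (eLpNorm (Dop d (s + α) (fun x => ψ x)) 2 volume) ^ θ := by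
  have : Nonempty (Fin d) := ⟨⟨0, hd⟩⟩
  have hb : 0 < s + α := by linarith
  have hθ' : (α + d / 2) / (s + α) = θ := by
    rw [hθ, ← mul_div_mul_left _ _ two_ne_zero]
    ring
  set K := eLpNorm (fun ξ : EuclideanSpace ℝ (Fin d) ↦ carlsonWeight α (s + α) ‖ξ‖) 2 volume
  have hK : K ≠ ⊤ := by
    refine (memLp_carlsonWeight_norm two_ne_zero ENNReal.ofNat_ne_top ?_ ?_).eLpNorm_ne_top <;>
    · simp only [finrank_euclideanSpace_fin, ENNReal.toReal_ofNat]
      linarith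
  refine ⟨(2 * K).toReal, fun ψ ↦ (eLpNorm_top_Dop_le α ψ).trans ?_⟩
  have h_carlson := carlson_inequality (a := α) (q := 2) (r := 1) (μ := volume)
    ENNReal.ofNat_ne_top one_le_two hb.ne' ((𝓕 ψ).memLp 2)
    (memLp_norm_rpow_smul_schwartz hb.le (𝓕 ψ) 2)
  rw [finrank_euclideanSpace_fin, ENNReal.toReal_ofNat, hθ', eLpNorm_two_fourier_schwartz,
    ← eLpNorm_two_Dop hb.le] at h_carlson
  rwa [ENNReal.ofReal_toReal (ENNReal.mul_ne_top ENNReal.ofNat_ne_top hK),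
    ← SchwartzMap.fourier_coe]

/-- Fractional Gagliardo–Nirenberg inequality, endpoint case `p = ∞`: if `d < 2s` and
`θ = (2d-λ)/(d+2s-λ)`, then
`‖D^{(d-λ)/2} ψ‖_{L^∞} ≤ C ‖ψ‖_{L²}^{1-θ} ‖D^{s+(d-λ)/2} ψ‖_{L²}^θ`
for every Schwartz function `ψ`. -/
theorem fractional_gagliardo_nirenberg_endpoint
    (d : ℕ) (hd : 1 ≤ d) (s lam θ : ℝ)
    (hs : 0 < s) (hlam₀ : 0 < lam) (hlam₁ : lam < d) (hds : (d : ℝ) < 2 * s)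
    (hθ : θ = (2 * d - lam) / (d + 2 * s - lam)) :
    ∃ C : ℝ, ∀ ψ : SchwartzMap (EuclideanSpace ℝ (Fin d)) ℂ,
      eLpNorm (Dop d ((d - lam) / 2) (fun x => ψ x)) ⊤ volume ≤
        ENNReal.ofReal C * (eLpNorm (fun x => ψ x) 2 volume) ^ (1 - θ) *
          (eLpNorm (Dop d (s + (d - lam) / 2) (fun x => ψ x)) 2 volume) ^ θ := by
  exact fractional_gagliardo_nirenberg_endpoint_general d hd s ((d - lam) / 2) θ (by linarith) hds
    (hθ.trans (by ring_nf))
end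
end

section
/- Let d ≥ 1, 0 < λ < d, and let f_n, f be measurable complex-valued functions on ℝ^d such that f_n(x) → f(x) for a.e. x ∈ ℝ^d and sup_n I_λ(f_n) < ∞. Then ∬_{ℝ^d×ℝ^d} \overline{f_n(x)} f(x) \overline{f(y)} f_n(y) |x−y|^{−λ} dx dy → ∬_{ℝ^d×ℝ^d} |f(x)|² |f(y)|² |x−y|^{−λ} dx dy as n → ∞. -/
open MeasureTheory Filter ENNReal

noncomputable section

/-- The Riesz energy `I_λ(g) = ∬ |g(x)|² |g(y)|² |x-y|^{-λ} dx dy`. -/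
def rieszEnergy (d : ℕ) (lam : ℝ) (g : EuclideanSpace ℝ (Fin d) → ℂ) : ℝ≥0∞ :=
  ∫⁻ x, ∫⁻ y, (‖g x‖₊ : ℝ≥0∞) ^ 2 * (‖g y‖₊ : ℝ≥0∞) ^ 2 *
    ENNReal.ofReal (‖x - y‖ ^ (-lam))

/-! Put `U_g(x, y) = conj g(x) g(y) |x-y|^{-λ/2}`. The Riesz energy of `g` is `‖U_g‖²` in `L²`, and
the integrals in question are the `L²` pairings of `U_{f_n}` with `U_f` and of `U_f` with itself.
So it is enough that an `L²`-bounded sequence converging a.e. converges weakly: by Hölder, its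
products with a fixed `L²` function are uniformly integrable and uniformly tight, and Vitali's
theorem applies. -/

open scoped NNReal ComplexConjugate Topology

section BoundedInLp

variable {α ι 𝕜 E : Type*} {m : MeasurableSpace α} {μ : Measure α} [NormedRing 𝕜]
  [NormedAddCommGroup E] [Module 𝕜 E] [IsBoundedSMul 𝕜 E] {p q r : ℝ≥0∞} {C : ℝ≥0} {g : α → E}

theorem eLpNorm_indicator_smul_le [HolderTriple p q r] {φ : α → 𝕜}
    (hφ : AEStronglyMeasurable φ μ) (hg : AEStronglyMeasurable g μ) {s : Set α}
    (hs : MeasurableSet s) :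
    eLpNorm (s.indicator (φ • g)) r μ ≤ eLpNorm φ p μ * eLpNorm (s.indicator g) q μ := by
  have indicator_smul : s.indicator (φ • g) = φ • s.indicator g := Set.indicator_smul s φ g
  rw [indicator_smul]
  exact eLpNorm_smul_le_mul_eLpNorm (hg.indicator hs) hφ

theorem unifIntegrable_smul_of_eLpNorm_le [HolderTriple p q r] {φ : ι → α → 𝕜}
    (hφ : ∀ i, AEStronglyMeasurable (φ i) μ) (hφC : ∀ i, eLpNorm (φ i) p μ ≤ C)
    (hq_one : 1 ≤ q) (hq_top : q ≠ ∞) (hg : MemLp g q μ) :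
    UnifIntegrable (fun i ↦ φ i • g) r μ := by
  intro ε hε
  obtain ⟨δ, hδ, hgδ⟩ := hg.eLpNorm_indicator_le hq_one hq_top (ε := ε / (C + 1)) (by positivity)
  refine ⟨δ, hδ, fun i s hs hμs ↦ ?_⟩
  calc eLpNorm (s.indicator (φ i • g)) r μ
      ≤ eLpNorm (φ i) p μ * eLpNorm (s.indicator g) q μ :=
        eLpNorm_indicator_smul_le (hφ i) hg.aestronglyMeasurable hs
    _ ≤ C * ENNReal.ofReal (ε / (C + 1)) := mul_le_mul' (hφC i) (hgδ s hs hμs)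
    _ = ENNReal.ofReal (C * (ε / (C + 1))) := by
        rw [ENNReal.ofReal_mul C.coe_nonneg, ENNReal.ofReal_coe_nnreal]
    _ ≤ ENNReal.ofReal ε := by
        gcongr
        rw [mul_div_left_comm]
        exact mul_le_of_le_one_right hε.le (div_le_one_of_le₀ (by simp) (by positivity))

theorem unifTight_smul_of_eLpNorm_le [HolderTriple p q r] {φ : ι → α → 𝕜}
    (hφ : ∀ i, AEStronglyMeasurable (φ i) μ) (hφC : ∀ i, eLpNorm (φ i) p μ ≤ C)
    (hq_top : q ≠ ∞) (hg : MemLp g q μ) :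
    UnifTight (fun i ↦ φ i • g) r μ := by
  intro ε hε
  obtain ⟨s, hs, hμs, hgs⟩ := hg.exists_eLpNorm_indicator_compl_lt hq_top
    (ε := ((ε / (C + 1) : ℝ≥0) : ℝ≥0∞)) (by positivity)
  refine ⟨s, hμs.ne, fun i ↦ ?_⟩
  calc eLpNorm (sᶜ.indicator (φ i • g)) r μ
      ≤ eLpNorm (φ i) p μ * eLpNorm (sᶜ.indicator g) q μ :=
        eLpNorm_indicator_smul_le (hφ i) hg.aestronglyMeasurable hs.compl
    _ ≤ C * (ε / (C + 1) : ℝ≥0) := mul_le_mul' (hφC i) hgs.le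
    _ ≤ ε := by
        norm_cast
        rw [mul_div_left_comm]
        exact mul_le_of_le_one_right' (div_le_one_of_le₀ (by simp) (by positivity))

theorem memLp_of_ae_tendsto_of_eLpNorm_le {l : Filter ι} [l.NeBot] [l.IsCountablyGenerated]
    {f : ι → α → E} {f₀ : α → E} (hf : ∀ i, AEStronglyMeasurable (f i) μ)
    (hfC : ∀ i, eLpNorm (f i) p μ ≤ C) (h_tendsto : ∀ᵐ x ∂μ, Tendsto (f · x) l (𝓝 (f₀ x))) :
    MemLp f₀ p μ :=
  ⟨aestronglyMeasurable_of_tendsto_ae l hf h_tendsto,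
    (Lp.eLpNorm_le_of_ae_tendsto (.of_forall hfC) hf h_tendsto).trans_lt coe_lt_top⟩

theorem tendsto_eLpNorm_smul_sub_of_ae_tendsto [HolderTriple p q r] {φ : ℕ → α → 𝕜} {φ₀ : α → 𝕜}
    (hφ : ∀ n, AEStronglyMeasurable (φ n) μ) (hφC : ∀ n, eLpNorm (φ n) p μ ≤ C)
    (h_tendsto : ∀ᵐ x ∂μ, Tendsto (φ · x) atTop (𝓝 (φ₀ x)))
    (hr_one : 1 ≤ r) (hq_top : q ≠ ∞) (hg : MemLp g q μ) :
    Tendsto (fun n ↦ eLpNorm (φ n • g - φ₀ • g) r μ) atTop (𝓝 0) := by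
  have : HolderTriple q p r := .symm
  have hrq : r ≤ q := HolderTriple.le q p r
  refine tendsto_Lp_of_tendsto_ae hr_one (ne_top_of_le_ne_top hq_top hrq)
    (fun n ↦ (hφ n).smul hg.aestronglyMeasurable)
    (hg.smul (memLp_of_ae_tendsto_of_eLpNorm_le hφ hφC h_tendsto))
    (unifIntegrable_smul_of_eLpNorm_le hφ hφC (hr_one.trans hrq) hq_top hg)
    (unifTight_smul_of_eLpNorm_le hφ hφC hq_top hg) ?_
  filter_upwards [h_tendsto] with x hx using hx.smul_const (g x)

theorem tendsto_integral_smul_of_ae_tendsto [NormedSpace ℝ E] [HolderConjugate p q]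
    {φ : ℕ → α → 𝕜} {φ₀ : α → 𝕜}
    (hφ : ∀ n, AEStronglyMeasurable (φ n) μ) (hφC : ∀ n, eLpNorm (φ n) p μ ≤ C)
    (h_tendsto : ∀ᵐ x ∂μ, Tendsto (φ · x) atTop (𝓝 (φ₀ x))) (hq_top : q ≠ ∞) (hg : MemLp g q μ) :
    Tendsto (fun n ↦ ∫ x, φ n x • g x ∂μ) atTop (𝓝 (∫ x, φ₀ x • g x ∂μ)) := by
  have hφ₀ : MemLp φ₀ p μ := memLp_of_ae_tendsto_of_eLpNorm_le hφ hφC h_tendsto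
  have integrable_smul (n : ℕ) : Integrable (φ n • g) μ :=
    memLp_one_iff_integrable.1 (hg.smul ⟨hφ n, (hφC n).trans_lt coe_lt_top⟩)
  exact tendsto_integral_of_L1' (φ₀ • g) (hφ₀.1.smul hg.1) (.of_forall integrable_smul)
    (tendsto_eLpNorm_smul_sub_of_ae_tendsto hφ hφC h_tendsto le_rfl hq_top hg)

end BoundedInLp

section KernelEnergy

variable {X 𝕜 : Type*} [RCLike 𝕜] {k : X → X → ℝ}

/-- The function `(x, y) ↦ conj g(x) g(y) k(x, y)^{1/2}`, which turns energies for the kernel `k`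
into squared `L²` norms on `X × X`. Negative values of `k` count as `0`. -/
def kernelTensor (k : X → X → ℝ) (g : X → 𝕜) (z : X × X) : 𝕜 :=
  conj (g z.1) * g z.2 * (√(k z.1 z.2) : ℝ)

theorem enorm_kernelTensor_sq (k : X → X → ℝ) (g : X → 𝕜) (x y : X) :
    ‖kernelTensor k g (x, y)‖ₑ ^ 2 = ‖g x‖ₑ ^ 2 * ‖g y‖ₑ ^ 2 * ENNReal.ofReal (k x y) := by
  have enorm_sqrt_sq : ‖((√(k x y) : ℝ) : 𝕜)‖ₑ ^ 2 = ENNReal.ofReal (k x y) := by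
    rw [← ofReal_norm, RCLike.norm_of_nonneg (Real.sqrt_nonneg _),
      ← ENNReal.ofReal_pow (Real.sqrt_nonneg _), Real.sq_sqrt', ENNReal.ofReal_max,
      ENNReal.ofReal_zero, max_zero]
  simp only [kernelTensor, enorm_mul, mul_pow, RCLike.enorm_conj, enorm_sqrt_sq]

theorem kernelTensor_mul_conj {x y : X} (hk : 0 ≤ k x y) (g h : X → 𝕜) :
    kernelTensor k g (x, y) * conj (kernelTensor k h (x, y)) =
      conj (g x) * h x * conj (h y) * g y * (k x y : ℝ) := by
  have sqrt_mul_sqrt : ((√(k x y) : ℝ) : 𝕜) * (√(k x y) : ℝ) = (k x y : ℝ) := by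
    rw [← RCLike.ofReal_mul, Real.mul_self_sqrt hk]
  simp only [kernelTensor, map_mul, RCLike.conj_conj, RCLike.conj_ofReal, ← sqrt_mul_sqrt]
  ring

theorem kernelTensor_mul_conj_self {x y : X} (hk : 0 ≤ k x y) (g : X → 𝕜) :
    kernelTensor k g (x, y) * conj (kernelTensor k g (x, y)) =
      ((‖g x‖ ^ 2 * ‖g y‖ ^ 2 * k x y : ℝ) : 𝕜) := by
  rw [kernelTensor_mul_conj hk, RCLike.conj_mul, mul_assoc (_ ^ 2), RCLike.conj_mul]
  push_cast
  rfl

variable [MeasurableSpace X] {μ : Measure X}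

theorem aestronglyMeasurable_kernelTensor
    (hk : AEStronglyMeasurable (Function.uncurry k) (μ.prod μ)) {g : X → 𝕜}
    (hg : AEStronglyMeasurable g μ) :
    AEStronglyMeasurable (kernelTensor k g) (μ.prod μ) :=
  ((RCLike.continuous_conj.comp_aestronglyMeasurable hg.comp_fst).mul hg.comp_snd).mul
    ((RCLike.continuous_ofReal.comp Real.continuous_sqrt).comp_aestronglyMeasurable hk)

theorem ae_tendsto_kernelTensor {ι : Type*} {l : Filter ι} {f : ι → X → 𝕜} {f₀ : X → 𝕜}
    (h_tendsto : ∀ᵐ x ∂μ, Tendsto (f · x) l (𝓝 (f₀ x))) :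
    ∀ᵐ z ∂μ.prod μ, Tendsto (fun i ↦ kernelTensor k (f i) z) l (𝓝 (kernelTensor k f₀ z)) := by
  filter_upwards [Measure.quasiMeasurePreserving_fst.ae h_tendsto,
    Measure.quasiMeasurePreserving_snd.ae h_tendsto] with z hz₁ hz₂
  exact (((RCLike.continuous_conj.tendsto _).comp hz₁).mul hz₂).mul_const _

/-- The energy `∬ |g(x)|² |g(y)|² k(x, y) dμ(x) dμ(y)` of a function `g` for the kernel `k`, of
which the Riesz energy is the case `k(x, y) = |x-y|^{-λ}`. Negative values of `k` count as `0`. -/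
def kernelEnergy (k : X → X → ℝ) (μ : Measure X) (g : X → 𝕜) : ℝ≥0∞ :=
  ∫⁻ x, ∫⁻ y, ‖g x‖ₑ ^ 2 * ‖g y‖ₑ ^ 2 * ENNReal.ofReal (k x y) ∂μ ∂μ

variable [SFinite μ]

theorem eLpNorm_kernelTensor_sq
    (hk : AEStronglyMeasurable (Function.uncurry k) (μ.prod μ)) {g : X → 𝕜}
    (hg : AEStronglyMeasurable g μ) :
    eLpNorm (kernelTensor k g) 2 (μ.prod μ) ^ 2 = kernelEnergy k μ g := by
  have eLpNorm_sq : eLpNorm (kernelTensor k g) 2 (μ.prod μ) ^ 2 =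
      ∫⁻ z, ‖kernelTensor k g z‖ₑ ^ 2 ∂μ.prod μ := by
    simpa using eLpNorm_nnreal_pow_eq_lintegral (f := kernelTensor k g) (two_ne_zero (α := ℝ≥0))
  rw [eLpNorm_sq, lintegral_prod _ ((aestronglyMeasurable_kernelTensor hk hg).enorm.pow_const 2)]
  simp only [enorm_kernelTensor_sq, kernelEnergy]

theorem integral_integral_kernelTensor_mul_conj {g h : X → 𝕜}
    (hg : MemLp (kernelTensor k g) 2 (μ.prod μ)) (hh : MemLp (kernelTensor k h) 2 (μ.prod μ)) :
    ∫ x, ∫ y, kernelTensor k g (x, y) * conj (kernelTensor k h (x, y)) ∂μ ∂μ =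
      ∫ z, kernelTensor k g z * conj (kernelTensor k h z) ∂μ.prod μ :=
  (integral_prod _ (memLp_one_iff_integrable.1 (hh.star.mul hg))).symm

theorem riesz_weak_convergence_term_general (hk_nonneg : ∀ x y, 0 ≤ k x y)
    (hk : AEStronglyMeasurable (Function.uncurry k) (μ.prod μ)) {f : ℕ → X → 𝕜} {f₀ : X → 𝕜}
    (hf : ∀ n, AEStronglyMeasurable (f n) μ)
    (h_tendsto : ∀ᵐ x ∂μ, Tendsto (f · x) atTop (𝓝 (f₀ x)))
    (h_energy : ∃ M : ℝ≥0∞, M < ∞ ∧ ∀ n, kernelEnergy k μ (f n) ≤ M) :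
    Tendsto
      (fun n ↦ ∫ x, ∫ y, conj (f n x) * f₀ x * conj (f₀ y) * f n y * ((k x y : ℝ) : 𝕜) ∂μ ∂μ) atTop
      (𝓝 (∫ x, ∫ y, ((‖f₀ x‖ ^ 2 * ‖f₀ y‖ ^ 2 * k x y : ℝ) : 𝕜) ∂μ ∂μ)) := by
  obtain ⟨M, hM, h_energy⟩ := h_energy
  lift M to ℝ≥0 using hM.ne
  have hU (n : ℕ) := aestronglyMeasurable_kernelTensor hk (hf n)
  have hU_le (n : ℕ) : eLpNorm (kernelTensor k (f n)) 2 (μ.prod μ) ≤ NNReal.sqrt M := by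
    rw [← ENNReal.pow_le_pow_left_iff two_ne_zero, eLpNorm_kernelTensor_sq hk (hf n)]
    exact_mod_cast (h_energy n).trans_eq (by simp)
  have hU_tendsto := ae_tendsto_kernelTensor (k := k) h_tendsto
  have hU₀ := memLp_of_ae_tendsto_of_eLpNorm_le hU hU_le hU_tendsto
  have weak_limit :=
    tendsto_integral_smul_of_ae_tendsto hU hU_le hU_tendsto ofNat_ne_top hU₀.star
  simp only [smul_eq_mul, Pi.star_apply, RCLike.star_def] at weak_limit
  simp_rw [← kernelTensor_mul_conj (hk_nonneg _ _), ← kernelTensor_mul_conj_self (hk_nonneg _ _),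
    integral_integral_kernelTensor_mul_conj hU₀ hU₀,
    fun n ↦ integral_integral_kernelTensor_mul_conj ⟨hU n, (hU_le n).trans_lt coe_lt_top⟩ hU₀]
  exact weak_limit

end KernelEnergy

/-- If `f_n → f` a.e. and the Riesz energies of the `f_n` are uniformly bounded, then
`∬ conj f_n(x) f(x) conj f(y) f_n(y) |x-y|^{-λ} dx dy → ∬ |f(x)|² |f(y)|² |x-y|^{-λ} dx dy`. -/
theorem riesz_weak_convergence_term
    (d : ℕ) (hd : 1 ≤ d) (lam : ℝ) (hlam₀ : 0 < lam) (hlam₁ : lam < d)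
    (f : ℕ → EuclideanSpace ℝ (Fin d) → ℂ) (f₀ : EuclideanSpace ℝ (Fin d) → ℂ)
    (hmeas : ∀ n, Measurable (f n)) (hmeas₀ : Measurable f₀)
    (hae : ∀ᵐ x : EuclideanSpace ℝ (Fin d), Tendsto (fun n => f n x) atTop (nhds (f₀ x)))
    (hriesz : ∃ M : ℝ≥0∞, M < ⊤ ∧ ∀ n, rieszEnergy d lam (f n) ≤ M) :
    Tendsto (fun n => ∫ x, ∫ y,
        (starRingEnd ℂ) (f n x) * f₀ x * (starRingEnd ℂ) (f₀ y) * f n y *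
          ((‖x - y‖ ^ (-lam) : ℝ) : ℂ))
      atTop
      (nhds (∫ x, ∫ y,
        ((‖f₀ x‖ ^ 2 * ‖f₀ y‖ ^ 2 * ‖x - y‖ ^ (-lam) : ℝ) : ℂ))) := by
  have hk : Measurable (Function.uncurry fun x y : EuclideanSpace ℝ (Fin d) ↦ ‖x - y‖ ^ (-lam)) :=
    (measurable_fst.sub measurable_snd).norm.pow_const _
  exact riesz_weak_convergence_term_general (fun _ _ ↦ by positivity) hk.aestronglyMeasurable
    (fun n ↦ (hmeas n).aestronglyMeasurable) hae hriesz
end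
end
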